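/- Let R = k[x_1,…,x_d] with d ≥ 3 and let E be a torsion-free R-module of rank e and projective dimension one with μ(E) = d+e, minimal free resolution 0 → R^d →φ R^{d+e} → E → 0 where φ = [φ′ | φ″] with φ′ having d−2 columns of linear forms and φ″ two columns of quadrics, I_1(φ) = (x_1,…,x_d), and E satisfying G_d. Let A = H^0_m(S(E)) with m = (x_1,…,x_d), and let σ = B(φ′) be the d×(d−2) Jacobian dual of φ′. If ht I(σ) = 3, then the T-module A_1 is minimally generated by d equations of bidegree (1, 2d−2). -/

import Mathlib

/-!
STATEMENT 10: With `R`, `E`, `φ` as in Statement 7, `A = H⁰_m(S(E))` and `σ = B(φ′)`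
the Jacobian dual of the linear part: if `ht I(σ) = 3` then the `T`-module `A_1` is
minimally generated by `d` equations of bidegree `(1, 2d−2)`.
-/

open MvPolynomial

noncomputable section

namespace Stmt10

variable (k : Type) [Field k] (d n : ℕ)

/-- `B = R ⊗_k T = k[x_1,…,x_d,y_1,…,y_n]`. -/
abbrev B := MvPolynomial (Fin d ⊕ Fin n) k

/-- `T = k[y_1,…,y_n]`. -/
abbrev T := MvPolynomial (Fin n) k

/-- `B` is a `T`-algebra via `y_j ↦ y_j`. -/
instance : Algebra (T k n) (B k d n) :=
  ((rename Sum.inr : T k n →ₐ[k] B k d n).toRingHom).toAlgebra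

/-- The bigrading weight: `bideg x_i = (1,0)`, `bideg y_j = (0,1)`. -/
def bwt : (Fin d ⊕ Fin n) → ℕ × ℕ := Sum.elim (fun _ => (1, 0)) (fun _ => (0, 1))

/-- The `x`-degree weight. -/
def wx : (Fin d ⊕ Fin n) → ℕ := Sum.elim (fun _ => 1) (fun _ => 0)

/-- The ideal `m = (x_1,…,x_d)B`. -/
def mxB : Ideal (B k d n) := Ideal.span (Set.range fun i : Fin d => (X (Sum.inl i) : B k d n))

variable (I : Ideal (B k d n))

/-- `A = H⁰_m(S)`: elements of `S = B/I` annihilated by a power of `m`. -/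
def H0 : Submodule (B k d n) (B k d n ⧸ I) :=
  ⨆ N : ℕ, Submodule.torsionBySet (B k d n) (B k d n ⧸ I)
    ((mxB k d n ^ N : Ideal (B k d n)) : Set (B k d n))

/-- The bigraded component of `S = B/I` in bidegree `p`. -/
def Scomp (p : ℕ × ℕ) : Submodule k (B k d n ⧸ I) :=
  (weightedHomogeneousSubmodule k (bwt d n) p).map (Ideal.Quotient.mkₐ k I).toLinearMap

/-- The graded strand `S_j = ⊕_b S_{(j,b)}` of `S` in `x`-degree `j`, as a `T`-module. -/
def SxDeg (j : ℕ) : Submodule (T k n) (B k d n ⧸ I) :=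
  Submodule.span (T k n) ((Ideal.Quotient.mk I) '' {g : B k d n | g.IsWeightedHomogeneous (wx d n) j})

/-- The graded strand of `S` in (possibly negative) `x`-degree `i : ℤ`. -/
def SxDegZ (i : ℤ) : Submodule (T k n) (B k d n ⧸ I) :=
  if 0 ≤ i then SxDeg k d n I i.toNat else ⊥

/-- The graded strand `A_i = ⊕_b A_{(i,b)}` of `A = H⁰_m(S)`, as a `T`-module. -/
def AcompZ (i : ℤ) : Submodule (T k n) (B k d n ⧸ I) :=
  (H0 k d n I).restrictScalars (T k n) ⊓ SxDegZ k d n I i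

/-- The graded component of `T` in (possibly negative) degree `j`. -/
def TcompZ (j : ℤ) : Submodule k (T k n) :=
  if 0 ≤ j then homogeneousSubmodule (Fin n) k j.toNat else ⊥

/-- The ideal of `t × t` minors of a matrix. -/
def minorsIdeal {R : Type} [CommRing R] {m' n' : Type} (M : Matrix m' n' R) (t : ℕ) :
    Ideal R :=
  Ideal.span {x | ∃ (f : Fin t → m') (g : Fin t → n'), x = (M.submatrix f g).det}

/-- `ht I ≥ c`: every prime containing `I` has height (= dimension of the localization)
at least `c`. -/
def htGE {R : Type} [CommRing R] (I : Ideal R) (c : ℕ) : Prop :=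
  ∀ (p : Ideal R) (_ : p.IsPrime), I ≤ p →
    (c : WithBot ℕ∞) ≤ ringKrullDim (Localization.AtPrime p)


section PartOne
open MvPolynomial Polynomial

/-- `f, g` is a (weakly) regular pair with `f ≠ 0`. -/
def Cop {A : Type*} [CommRing A] (f g : A) : Prop := f ≠ 0 ∧ ∀ h, f ∣ g * h → f ∣ h

theorem Cop.split {A : Type*} [CommRing A] [IsDomain A] {f g : A} (h : Cop f g) {x y : A}
    (e : x * f = y * g) : ∃ c, y = c * f ∧ x = c * g := by
  obtain ⟨c, hc⟩ := h.2 y ⟨x, by linear_combination -e⟩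
  refine ⟨c, by rw [hc]; ring, ?_⟩
  apply mul_right_cancel₀ h.1
  rw [e, hc]; ring

theorem cop_of_no_prime {A : Type*} [CommRing A] [IsDomain A] [UniqueFactorizationMonoid A]
    {f g : A} (hf : f ≠ 0) (h : ∀ p, Prime p → p ∣ f → ¬ p ∣ g) : Cop f g := by
  have hr : IsRelPrime f g :=
    (UniqueFactorizationMonoid.isRelPrime_iff_no_prime_factors hf).2
      (fun p h1 h2 hp => h p hp h1 h2)
  exact ⟨hf, fun x hx => hr.dvd_of_dvd_mul_left hx⟩

theorem exists_cop {A : Type*} [CommRing A] [IsDomain A] [UniqueFactorizationMonoid A]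
    [IsNoetherianRing A] (J : Ideal A)
    (h : ∀ P : Ideal A, P.IsPrime → J ≤ P → 2 ≤ P.height) :
    ∃ f ∈ J, ∃ g ∈ J, Cop f g := by
  classical
  have hJ : J ≠ ⊥ := by
    rintro rfl
    have := h ⊥ Ideal.isPrime_bot le_rfl
    simp [Ideal.height_bot] at this
  obtain ⟨f, hfJ, hf0⟩ := Submodule.exists_mem_ne_zero_of_ne_bot hJ
  let s := (UniqueFactorizationMonoid.factors f).toFinset
  have hs : ∀ p ∈ s, Prime p := fun p hp =>
    UniqueFactorizationMonoid.prime_of_factor p (by simpa [s] using hp)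
  have key : ¬ ((J : Set A) ⊆ ⋃ i ∈ (s : Set A), ((Ideal.span {i} : Ideal A) : Set A)) := by
    rw [Ideal.subset_union_prime 0 0
      (fun i hi _ _ => (Ideal.span_singleton_prime (hs i hi).ne_zero).2 (hs i hi))]
    rintro ⟨p, hp, hle⟩
    have hpr := hs p hp
    have h2 := h _ ((Ideal.span_singleton_prime hpr.ne_zero).2 hpr) hle
    have h1 := Ideal.height_span_singleton_le_one (x := p) hpr.not_isUnit
    have := h2.trans h1
    exact absurd this (by decide)
  rw [Set.not_subset] at key
  obtain ⟨g, hgJ, hg⟩ := key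
  refine ⟨f, hfJ, g, hgJ, cop_of_no_prime hf0 ?_⟩
  intro p hp hpf hpg
  obtain ⟨q, hq, hpq⟩ := UniqueFactorizationMonoid.exists_mem_factors_of_dvd hf0 hp.irreducible hpf
  apply hg
  simp only [Set.mem_iUnion]
  exact ⟨q, by simpa [s] using hq, Ideal.mem_span_singleton.2 (hpq.symm.dvd.trans hpg)⟩

/-- Unmixedness of two-generated ideals, in the form we need. -/
def QProp (A : Type*) [CommRing A] : Prop :=
  ∀ (J : Ideal A) (f g z : A), (∀ P : Ideal A, P.IsPrime → J ≤ P → 3 ≤ P.height) →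
    Cop f g → f ∈ J → g ∈ J → (∀ r ∈ J, r * z ∈ Ideal.span {f, g}) → z ∈ Ideal.span {f, g}

theorem exch {A : Type*} [CommRing A] [IsDomain A] {f g a b z : A} (hfg : Cop f g)
    (ha : a * z ∈ Ideal.span {f, g}) (hb : b * z ∈ Ideal.span {f, g}) :
    ∃ μ : A, (∀ r, r * z ∈ Ideal.span {f, g} → r * μ ∈ Ideal.span {a, b}) ∧
      (Cop a b → μ ∈ Ideal.span {a, b} → z ∈ Ideal.span {f, g}) := by
  rw [Ideal.mem_span_pair] at ha hb
  obtain ⟨α, β, h1⟩ := ha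
  obtain ⟨γ, δ, h2⟩ := hb
  obtain ⟨μ, m1, m2⟩ := hfg.split (x := b * α - a * γ) (y := a * δ - b * β)
    (by linear_combination b * h1 - a * h2)
  refine ⟨μ, ?_, ?_⟩
  · intro r hr
    rw [Ideal.mem_span_pair] at hr
    obtain ⟨ε, ζ, h3⟩ := hr
    obtain ⟨ν, n1, n2⟩ := hfg.split (x := a * ε - r * α) (y := r * β - a * ζ)
      (by linear_combination a * h3 - r * h1)
    obtain ⟨ν', n1', n2'⟩ := hfg.split (x := b * ε - r * γ) (y := r * δ - b * ζ)
      (by linear_combination b * h3 - r * h2)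
    rw [Ideal.mem_span_pair]
    refine ⟨ν', -ν, mul_right_cancel₀ hfg.1 ?_⟩
    linear_combination -a * n1' + b * n1 + r * m1
  · intro hab hμ
    rw [Ideal.mem_span_pair] at hμ
    obtain ⟨ρ, ρ', hρ⟩ := hμ
    -- μ = ρ a + ρ' b
    obtain ⟨ω, w1, w2⟩ := hab.split (x := γ + ρ * g) (y := α - ρ' * g)
      (by linear_combination -m2 + g * hρ)
    obtain ⟨ω', w1', w2'⟩ := hab.split (x := δ - ρ * f) (y := β + ρ' * f)
      (by linear_combination m1 - f * hρ)
    rw [Ideal.mem_span_pair]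
    refine ⟨ω, ω', mul_left_cancel₀ hab.1 ?_⟩
    linear_combination h1 - f * w1 - g * w1'

attribute [local instance] Polynomial.algebra Polynomial.isLocalization in
theorem height_le_comap_add_one {A : Type*} [CommRing A] [IsNoetherianRing A]
    (P : Ideal A[X]) [P.IsPrime] : P.height ≤ (P.comap Polynomial.C).height + 1 := by
  set p := P.comap Polynomial.C with hp
  have : p.IsPrime := Ideal.comap_isPrime _ _
  have hlies : P.LiesOver p := ⟨rfl⟩
  let Ap := Localization.AtPrime p
  let P' : Ideal Ap[X] := P.map (algebraMap A[X] Ap[X])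
  have disj : Disjoint (p.primeCompl.map Polynomial.C : Set A[X]) P := by
    refine Set.disjoint_left.mpr fun a ⟨b, hb⟩ ha ↦ hb.1 ?_
    rw [← hb.2] at ha
    exact ha
  have eq2 : P.height = P'.height := by
    rw [IsLocalization.height_map_of_disjoint (Submonoid.map Polynomial.C <| p.primeCompl) _ disj]
  have hP' : P'.IsPrime :=
    IsLocalization.isPrime_of_isPrime_disjoint (p.primeCompl.map Polynomial.C) _ _ ‹_› disj
  obtain ⟨M, hM, hle⟩ := Ideal.exists_le_maximal P' hP'.ne_top
  set p' : Ideal Ap := p.map (algebraMap A Ap) with p'_def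
  have hp'max : p'.IsMaximal := by
    rw [p'_def, Localization.AtPrime.map_eq_maximalIdeal]
    exact IsLocalRing.maximalIdeal.isMaximal Ap
  have hover : P'.LiesOver p' := IsLocalization.liesOver_of_isPrime_of_disjoint p.primeCompl _ _ disj
  have hMover : M.LiesOver p' := by
    constructor
    apply hp'max.eq_of_le
    · exact Ideal.IsPrime.ne_top (Ideal.comap_isPrime _ _)
    · rw [hover.over]
      exact Ideal.comap_mono hle
  have eq1 : p.height = p'.height := by
    rw [IsLocalization.height_map_of_disjoint p.primeCompl]
    exact Disjoint.symm <| Set.disjoint_left.mpr fun _ a b ↦ b a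
  rw [eq2, eq1, ← Polynomial.height_eq_height_add_one p' M]
  exact Ideal.height_mono hle

theorem height_map_C_prime {A : Type*} [CommRing A] [IsNoetherianRing A]
    (p : Ideal A) [p.IsPrime] : (p.map Polynomial.C).height = p.height := by
  have : (p.map Polynomial.C).IsPrime := Ideal.isPrime_map_C_of_isPrime
  have : (p.map Polynomial.C).LiesOver p := ⟨by
    ext x
    simp [Ideal.mem_map_C_iff, Ideal.under, Polynomial.coeff_C]
    constructor
    · intro h n; split_ifs <;> simp [h]
    · intro h; simpa using h 0⟩
  simp [Ideal.height_eq_height_add_of_liesOver_of_hasGoingDown p]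

theorem mem_span_pair_C_iff {A : Type*} [CommRing A] {a b : A} {μ : A[X]} :
    μ ∈ Ideal.span {Polynomial.C a, Polynomial.C b} ↔ ∀ n, μ.coeff n ∈ Ideal.span {a, b} := by
  rw [← Ideal.mem_map_C_iff, Ideal.map_span]
  simp [Set.image_pair]

theorem Cop.C {A : Type*} [CommRing A] [IsDomain A] {a b : A} (h : Cop a b) :
    Cop (Polynomial.C a : A[X]) (Polynomial.C b) := by
  refine ⟨by simpa using h.1, fun F hF => ?_⟩
  rw [Polynomial.C_dvd_iff_dvd_coeff] at hF ⊢
  intro i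
  apply h.2
  simpa using hF i

theorem QProp.polynomial {A : Type*} [CommRing A] [IsDomain A] [UniqueFactorizationMonoid A]
    [IsNoetherianRing A] (hA : QProp A) : QProp A[X] := by
  intro J f g z hJ hfg hf hg hz
  by_contra hzn
  -- pass to an associated prime
  obtain ⟨P, hP, hle⟩ := exists_le_isAssociatedPrime_of_isNoetherianRing A[X]
    (Ideal.Quotient.mk (Ideal.span {f, g}) z)
    (by rwa [Ne, Ideal.Quotient.eq_zero_iff_mem])
  have hPp : P.IsPrime := hP.isPrime
  obtain ⟨w, hw⟩ := (Submodule.isAssociatedPrime_iff.1 hP).2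
  obtain ⟨z', rfl⟩ := Ideal.Quotient.mk_surjective w
  have mem_iff : ∀ r y : A[X], r ∈ Submodule.colon (⊥ : Submodule A[X] (A[X] ⧸ Ideal.span {f, g}))
      {Ideal.Quotient.mk (Ideal.span {f, g}) y} ↔ r * y ∈ Ideal.span {f, g} := by
    intro r y
    rw [Submodule.mem_colon_singleton, ← Ideal.Quotient.eq_zero_iff_mem]
    exact Iff.rfl
  have hJP : J ≤ P := by
    intro r hr
    apply hle
    exact (mem_iff r z).2 (hz r hr)
  have hPz : ∀ r, r ∈ P ↔ r * z' ∈ Ideal.span {f, g} := by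
    intro r; conv_lhs => rw [hw]
    exact mem_iff r z'
  have hht := hJ P hPp hJP
  have hz' : z' ∉ Ideal.span {f, g} := by
    intro h
    exact hPp.ne_top ((Ideal.eq_top_iff_one _).2 ((hPz 1).2 (by simpa using h)))
  have hpp : (P.comap Polynomial.C).IsPrime := Ideal.comap_isPrime _ _
  set p := P.comap Polynomial.C with hp
  have hp2 : 2 ≤ p.height := by
    have h := hht.trans (height_le_comap_add_one P)
    rw [← hp] at h
    have : (2 : ℕ∞) + 1 ≤ p.height + 1 := by simpa [show (2 : ℕ∞) + 1 = 3 by norm_num] using h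
    exact (ENat.add_le_add_iff_right (by simp)).1 this
  obtain ⟨a, ha, b, hb, hab⟩ := exists_cop p (fun Q _ hQ => hp2.trans (Ideal.height_mono hQ))
  obtain ⟨μ, hμ1, hμ2⟩ := exch (a := Polynomial.C a) (b := Polynomial.C b) (z := z') hfg ((hPz _).1 ha) ((hPz _).1 hb)
  apply hz'
  apply hμ2 hab.C
  have hpμ : ∀ r ∈ p, ∀ n, r * μ.coeff n ∈ Ideal.span {a, b} := by
    intro r hr n
    have := hμ1 (Polynomial.C r) ((hPz _).1 hr)
    rw [mem_span_pair_C_iff] at this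
    simpa using this n
  by_cases hp3 : 3 ≤ p.height
  · rw [mem_span_pair_C_iff]
    intro n
    exact hA p a b _ (fun Q _ hQ => hp3.trans (Ideal.height_mono hQ)) hab ha hb
      (fun r hr => hpμ r hr n)
  · -- there is `F ∈ P` with a coefficient outside `p`
    have hne : ¬ P ≤ p.map Polynomial.C := by
      intro hle
      have h1 := hht.trans (Ideal.height_mono hle)
      rw [height_map_C_prime] at h1
      exact hp3 h1
    obtain ⟨F, hFP, hFp⟩ := Set.not_subset.1 hne
    -- prime ideal strictly above `p` has height at least three
    have habove : ∀ s, s ∉ p → ∀ Q : Ideal A, Q.IsPrime → p ⊔ Ideal.span {s} ≤ Q → 3 ≤ Q.height := by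
      intro s hs Q hQ hle
      have hlt : p < Q := lt_of_le_of_ne (le_sup_left.trans hle) (by
        rintro rfl
        exact hs (hle (Ideal.mem_sup_right (Ideal.mem_span_singleton_self s))))
      have := Ideal.height_add_one_le_of_lt_of_isPrime hlt
      have h3 : (2 : ℕ∞) + 1 ≤ p.height + 1 := by gcongr
      have h4 := h3.trans this
      simpa [show (2 : ℕ∞) + 1 = 3 by norm_num] using h4
    have hFμ : ∀ n, (F * μ).coeff n ∈ Ideal.span {a, b} :=
      mem_span_pair_C_iff.1 (hμ1 F ((hPz _).1 hFP))
    by_contra hμn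
    rw [mem_span_pair_C_iff] at hμn
    push Not at hμn
    -- the top coefficient of `F` not in `p`, the top coefficient of `μ` not in `(a,b)`
    have hFp' : ∃ n, F.coeff n ∉ p := by
      by_contra hcon
      push Not at hcon
      exact hFp (Ideal.mem_map_C_iff.2 hcon)
    obtain ⟨i, hi, himax⟩ : ∃ i, F.coeff i ∉ p ∧ ∀ i', i < i' → F.coeff i' ∈ p := by
      classical
      obtain ⟨n, hn⟩ := hFp'
      have hle : n ≤ F.natDegree := le_natDegree_of_ne_zero (fun h => hn (by rw [h]; exact p.zero_mem))
      refine ⟨Nat.findGreatest (fun n => F.coeff n ∉ p) F.natDegree,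
        Nat.findGreatest_spec (P := fun n => F.coeff n ∉ p) hle hn, ?_⟩
      intro i' hi'
      by_cases h : i' ≤ F.natDegree
      · by_contra hcon
        exact Nat.findGreatest_is_greatest hi' h hcon
      · rw [coeff_eq_zero_of_natDegree_lt (by omega)]; exact p.zero_mem
    obtain ⟨j, hj, hjmax⟩ : ∃ j, μ.coeff j ∉ Ideal.span {a, b} ∧
        ∀ j', j < j' → μ.coeff j' ∈ Ideal.span {a, b} := by
      classical
      obtain ⟨n, hn⟩ := hμn
      have hle : n ≤ μ.natDegree :=
        le_natDegree_of_ne_zero (fun h => hn (by rw [h]; exact Ideal.zero_mem _))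
      refine ⟨Nat.findGreatest (fun n => μ.coeff n ∉ Ideal.span {a, b}) μ.natDegree,
        Nat.findGreatest_spec (P := fun n => μ.coeff n ∉ Ideal.span {a, b}) hle hn, ?_⟩
      intro i' hi'
      by_cases h : i' ≤ μ.natDegree
      · by_contra hcon
        exact Nat.findGreatest_is_greatest hi' h hcon
      · rw [coeff_eq_zero_of_natDegree_lt (by omega)]; exact Ideal.zero_mem _
    apply hj
    have hs : F.coeff i * μ.coeff j ∈ Ideal.span {a, b} := by
      have h1 := hFμ (i + j)
      rw [Polynomial.coeff_mul, ← Finset.add_sum_erase _ _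
        (show (i, j) ∈ Finset.HasAntidiagonal.antidiagonal (i + j) by simp)] at h1
      refine (Ideal.add_mem_iff_left _ ?_).1 h1
      refine Ideal.sum_mem _ (fun x hx => ?_)
      simp only [Finset.mem_erase, Finset.HasAntidiagonal.mem_antidiagonal, ne_eq] at hx
      obtain ⟨hx1, hx2⟩ := hx
      rcases lt_trichotomy x.1 i with h | h | h
      · exact Ideal.mul_mem_left _ _ (hjmax _ (by omega))
      · exact absurd (Prod.ext h (by simp; omega)) hx1
      · exact hpμ _ (himax _ h) _
    refine hA (p ⊔ Ideal.span {F.coeff i}) a b _ (habove _ hi) hab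
      (Ideal.mem_sup_left ha) (Ideal.mem_sup_left hb) ?_
    intro r hr
    obtain ⟨r1, hr1, r2, hr2, rfl⟩ := Submodule.mem_sup.1 hr
    obtain ⟨c, rfl⟩ := Ideal.mem_span_singleton.1 hr2
    rw [add_mul]
    refine Ideal.add_mem _ (hpμ _ hr1 _) ?_
    have := Ideal.mul_mem_left _ c hs
    convert this using 1; ring

theorem QProp.equiv {A A' : Type*} [CommRing A] [CommRing A'] (e : A ≃+* A') (h : QProp A) :
    QProp A' := by
  intro J f g z hJ hfg hf hg hz
  have hs : ∀ z, z ∈ Ideal.span {f, g} ↔ e.symm z ∈ Ideal.span {e.symm f, e.symm g} := by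
    intro z
    simp only [Ideal.mem_span_pair]
    constructor
    · rintro ⟨a, b, rfl⟩
      exact ⟨e.symm a, e.symm b, by simp⟩
    · rintro ⟨a, b, hab⟩
      refine ⟨e a, e b, e.symm.injective (by simpa using hab)⟩
  rw [hs]
  refine h (J.comap e) _ _ _ ?_ ?_ (by
      show e (e.symm f) ∈ J
      rw [e.apply_symm_apply]; exact hf)
    (by
      show e (e.symm g) ∈ J
      rw [e.apply_symm_apply]; exact hg) ?_
  · intro P hP hJP
    have : (P.comap e.symm).IsPrime := Ideal.comap_isPrime _ _
    have h3 := hJ (P.comap e.symm) this (fun x hx => by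
      rw [Ideal.mem_comap]; exact hJP (by rw [Ideal.mem_comap]; simpa using hx))
    rwa [RingEquiv.height_comap] at h3
  · refine ⟨by simpa using hfg.1, fun x hx => ?_⟩
    have := hfg.2 (e x) (by simpa using map_dvd e hx)
    simpa using map_dvd e.symm this
  · intro r hr
    have := (hs _).1 (hz (e r) hr)
    simpa using this

theorem QProp.field {K : Type*} [Field K] : QProp K := by
  intro J f g z hJ hfg hf hg hz
  by_cases h : J = ⊤
  · simpa using hz 1 (by rw [h]; trivial)
  · have hb : J = ⊥ := (Ideal.eq_bot_or_top J).resolve_right h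
    have := hJ ⊥ Ideal.isPrime_bot hb.le
    simp [Ideal.height_bot] at this

theorem QProp.mvPolynomial (K : Type*) [Field K] (n : ℕ) : QProp (MvPolynomial (Fin n) K) := by
  induction n with
  | zero => exact QProp.equiv (MvPolynomial.isEmptyRingEquiv K (Fin 0)).symm QProp.field
  | succ n ih => exact QProp.equiv (MvPolynomial.finSuccEquiv K n).symm.toRingEquiv ih.polynomial

end PartOne

section PartTwo
open Matrix

variable {A : Type*} [CommRing A] {m : ℕ}

/-- rows of the matrix defining the bracket -/
def brMat (σ : Matrix (Fin (m + 2)) (Fin m) A) (w w' : Fin (m + 2) → A) :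
    Matrix (Fin (m + 2)) (Fin (m + 2)) A :=
  Matrix.of (Fin.cons w (Fin.cons w' (fun j t => σ t j)) : Fin (m + 2) → Fin (m + 2) → A)

theorem brMat_left (σ : Matrix (Fin (m + 2)) (Fin m) A) (w₀ w w' : Fin (m + 2) → A) :
    brMat σ w w' = (brMat σ w₀ w').updateRow 0 w := by
  ext i j
  refine Fin.cases ?_ (fun i => ?_) i
  · simp [brMat]
  · rw [Matrix.updateRow_ne (Fin.succ_ne_zero i)]; simp [brMat]

theorem brMat_right (σ : Matrix (Fin (m + 2)) (Fin m) A) (w w₀ w' : Fin (m + 2) → A) :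
    brMat σ w w' = (brMat σ w w₀).updateRow 1 w' := by
  ext i j
  refine Fin.cases ?_ (fun i => ?_) i
  · rw [Matrix.updateRow_ne (by simp)]; simp [brMat]
  · refine Fin.cases ?_ (fun i => ?_) i
    · simp [brMat]
    · rw [Matrix.updateRow_ne (by simp [Fin.ext_iff])]; simp [brMat]

/-- the bracket -/
def br (σ : Matrix (Fin (m + 2)) (Fin m) A) :
    (Fin (m + 2) → A) →ₗ[A] (Fin (m + 2) → A) →ₗ[A] A :=
  LinearMap.mk₂ A (fun w w' => (brMat σ w w').det)
    (fun a b c => by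
      rw [brMat_left σ 0 (a + b), brMat_left σ 0 a, brMat_left σ 0 b, Matrix.det_updateRow_add])
    (fun r a c => by
      rw [brMat_left σ 0 (r • a), brMat_left σ 0 a, Matrix.det_updateRow_smul, smul_eq_mul])
    (fun a b c => by
      rw [brMat_right σ a 0 (b + c), brMat_right σ a 0 b, brMat_right σ a 0 c,
        Matrix.det_updateRow_add])
    (fun r a c => by
      rw [brMat_right σ a 0 (r • c), brMat_right σ a 0 c, Matrix.det_updateRow_smul, smul_eq_mul])

theorem br_apply (σ : Matrix (Fin (m + 2)) (Fin m) A) (w w' : Fin (m + 2) → A) :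
    br σ w w' = (brMat σ w w').det := rfl

theorem br_self (σ : Matrix (Fin (m + 2)) (Fin m) A) (w : Fin (m + 2) → A) : br σ w w = 0 := by
  rw [br_apply]
  refine Matrix.det_zero_of_row_eq (i := 0) (j := 1) (by simp) ?_
  ext j; simp [brMat]

theorem br_swap (σ : Matrix (Fin (m + 2)) (Fin m) A) (w w' : Fin (m + 2) → A) :
    br σ w w' = - br σ w' w := by
  have h := br_self σ (w + w')
  simp only [map_add, LinearMap.add_apply, br_self] at h
  linear_combination h

theorem br_col (σ : Matrix (Fin (m + 2)) (Fin m) A) (w : Fin (m + 2) → A) (j : Fin m) :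
    br σ (fun t => σ t j) w = 0 := by
  rw [br_apply]
  refine Matrix.det_zero_of_row_eq (i := 0) (j := j.succ.succ) (by simp [Fin.ext_iff]) ?_
  ext j; simp [brMat]

theorem mulVec_eq_sum_smul {p q : Type*} [Fintype q] (M : Matrix p q A) (v : q → A) :
    M *ᵥ v = ∑ j, v j • (fun t => M t j) := by
  ext t; simp [Matrix.mulVec, dotProduct, mul_comm]

theorem br_mulVec_left (σ : Matrix (Fin (m + 2)) (Fin m) A) (p : Fin m → A) (w : Fin (m + 2) → A) :
    br σ (σ *ᵥ p) w = 0 := by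
  rw [mulVec_eq_sum_smul]
  simp [br_col]

theorem br_mulVec_right (σ : Matrix (Fin (m + 2)) (Fin m) A) (p : Fin m → A)
    (w : Fin (m + 2) → A) : br σ w (σ *ᵥ p) = 0 := by
  rw [br_swap, br_mulVec_left, neg_zero]

/-- Cramer's rule -/
theorem br_cramer (σ : Matrix (Fin (m + 2)) (Fin m) A) (w1 w2 w : Fin (m + 2) → A) :
    ∃ p, br σ w1 w2 • w = br σ w w2 • w1 + br σ w1 w • w2 + σ *ᵥ p := by
  have h := Matrix.mulVec_cramer (brMat σ w1 w2)ᵀ w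
  rw [Matrix.det_transpose] at h
  refine ⟨fun j => (brMat σ w1 w2)ᵀ.cramer w j.succ.succ, ?_⟩
  rw [br_apply, ← h, mulVec_eq_sum_smul, Fin.sum_univ_succ, Fin.sum_univ_succ,
    mulVec_eq_sum_smul, ← add_assoc, Matrix.cramer_transpose_apply]
  rw [show (Fin.succ 0 : Fin (m + 2)) = 1 from rfl, Matrix.cramer_transpose_apply,
    ← brMat_left, ← brMat_right]
  rfl

theorem br_three (σ : Matrix (Fin (m + 2)) (Fin m) A) (x w1 w2 w : Fin (m + 2) → A)
    (hx : x ᵥ* σ = 0) :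
    br σ w1 w2 * (x ⬝ᵥ w) = br σ w w2 * (x ⬝ᵥ w1) + br σ w1 w * (x ⬝ᵥ w2) := by
  obtain ⟨p, hp⟩ := br_cramer σ w1 w2 w
  have := congrArg (fun v => x ⬝ᵥ v) hp
  simpa [dotProduct_add, dotProduct_smul, Matrix.dotProduct_mulVec, hx] using this

/-- standard basis vectors -/
abbrev ev (t : Fin (m + 2)) : Fin (m + 2) → A := Pi.single t 1

theorem br_right_sum (σ : Matrix (Fin (m + 2)) (Fin m) A) (τ w : Fin (m + 2) → A) :
    br σ τ w = ∑ s, w s * br σ τ (ev s) := by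
  conv_lhs => rw [pi_eq_sum_univ' w]
  simp only [map_sum, map_smul, smul_eq_mul]

theorem br_left_sum (σ : Matrix (Fin (m + 2)) (Fin m) A) (τ w : Fin (m + 2) → A) :
    br σ w τ = ∑ s, w s * br σ (ev s) τ := by
  conv_lhs => rw [pi_eq_sum_univ' w]
  simp only [map_sum, map_smul, smul_eq_mul, LinearMap.sum_apply, LinearMap.smul_apply]

/-- the vector c(τ) -/
def cv (σ : Matrix (Fin (m + 2)) (Fin m) A) : (Fin (m + 2) → A) →ₗ[A] (Fin (m + 2) → A) where
  toFun τ := fun s => br σ τ (ev s)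
  map_add' a b := by ext s; simp
  map_smul' r a := by ext s; simp

theorem cv_apply (σ : Matrix (Fin (m + 2)) (Fin m) A) (τ : Fin (m + 2) → A) (s) :
    cv σ τ s = br σ τ (ev s) := rfl

theorem dot_cv (σ : Matrix (Fin (m + 2)) (Fin m) A) (τ w : Fin (m + 2) → A) :
    w ⬝ᵥ cv σ τ = br σ τ w := by
  rw [br_right_sum]; rfl

/-- The G map -/
def Gm (σ : Matrix (Fin (m + 2)) (Fin m) A) (U V : Matrix (Fin (m + 2)) (Fin (m + 2)) A) :
    (Fin (m + 2) → A) →ₗ[A] (Fin (m + 2) → A) where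
  toFun τ := fun t => br σ (U *ᵥ cv σ τ) (fun s => V s t) +
    ∑ r, br σ (fun s => U t s) (ev r) * br σ τ (fun s => V s r)
  map_add' a b := by
    ext t
    simp only [map_add, Matrix.mulVec_add, LinearMap.add_apply, mul_add, Finset.sum_add_distrib,
      Pi.add_apply]
    ring
  map_smul' c a := by
    ext t
    simp only [map_smul, Matrix.mulVec_smul, LinearMap.smul_apply, smul_eq_mul, mul_left_comm _ c,
      ← Finset.mul_sum, Pi.smul_apply, RingHom.id_apply]
    ring

theorem Gm_apply (σ : Matrix (Fin (m + 2)) (Fin m) A) (U V : Matrix (Fin (m + 2)) (Fin (m + 2)) A)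
    (τ : Fin (m + 2) → A) (t) : Gm σ U V τ t = br σ (U *ᵥ cv σ τ) (fun s => V s t) +
    ∑ r, br σ (fun s => U t s) (ev r) * br σ τ (fun s => V s r) := rfl

theorem Gm_mulVec (σ : Matrix (Fin (m + 2)) (Fin m) A)
    (U V : Matrix (Fin (m + 2)) (Fin (m + 2)) A) (p : Fin m → A) :
    Gm σ U V (σ *ᵥ p) = 0 := by
  have h : cv σ (σ *ᵥ p) = 0 := by ext s; simp [cv_apply, br_mulVec_left]
  ext t
  simp [Gm_apply, h, br_mulVec_left]

theorem dot_Gm (σ : Matrix (Fin (m + 2)) (Fin m) A)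
    (U V : Matrix (Fin (m + 2)) (Fin (m + 2)) A) (x τ : Fin (m + 2) → A) :
    x ⬝ᵥ Gm σ U V τ = br σ (U *ᵥ cv σ τ) (V *ᵥ x) +
      ∑ r, br σ (x ᵥ* U) (ev r) * br σ τ (fun s => V s r) := by
  have h1 : V *ᵥ x = ∑ t, x t • (fun s => V s t) := mulVec_eq_sum_smul V x
  have h2 : x ᵥ* U = ∑ t, x t • (fun s => U t s) := by
    ext s; simp [Matrix.vecMul, dotProduct]
  rw [h1, h2]
  simp only [dotProduct, Gm_apply, map_sum, map_smul, LinearMap.sum_apply, LinearMap.smul_apply,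
    smul_eq_mul, mul_add, Finset.sum_add_distrib, Finset.sum_mul, Finset.mul_sum]
  congr 1
  rw [Finset.sum_comm]
  simp only [mul_assoc]

theorem lemmaA (σ : Matrix (Fin (m + 2)) (Fin m) A)
    (U V : Matrix (Fin (m + 2)) (Fin (m + 2)) A) (x τ : Fin (m + 2) → A)
    (hx : x ᵥ* σ = 0) (hU : x ⬝ᵥ U *ᵥ x = 0) (hV : x ⬝ᵥ V *ᵥ x = 0) (t : Fin (m + 2)) :
    x t * (x ⬝ᵥ Gm σ U V τ) = br σ τ (ev t) * br σ (U *ᵥ x) (V *ᵥ x) := by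
  have h1 : br σ τ (ev t) • x = x t • cv σ τ - (x ⬝ᵥ τ) • cv σ (ev t) := by
    ext s
    have := br_three σ x τ (ev t) (ev s) hx
    simp only [dotProduct_single, mul_one] at this
    simp only [Pi.smul_apply, Pi.sub_apply, smul_eq_mul, cv_apply]
    rw [br_swap σ (ev t) (ev s)]
    linear_combination this
  have h2 : br σ τ (ev t) * br σ (U *ᵥ x) (V *ᵥ x) =
      x t * br σ (U *ᵥ cv σ τ) (V *ᵥ x) - (x ⬝ᵥ τ) * br σ (U *ᵥ cv σ (ev t)) (V *ᵥ x) := by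
    have := congrArg (fun v => br σ (U *ᵥ v) (V *ᵥ x)) h1
    simpa [Matrix.mulVec_smul, Matrix.mulVec_sub] using this
  have h3 : (x ⬝ᵥ τ) * br σ (U *ᵥ cv σ (ev t)) (V *ᵥ x) =
      br σ τ (V *ᵥ x) * br σ (ev t) (x ᵥ* U) := by
    have := br_three σ x (U *ᵥ cv σ (ev t)) (V *ᵥ x) τ hx
    rw [hV, Matrix.dotProduct_mulVec, dot_cv] at this
    linear_combination this
  have h4 : ∀ r, x r * br σ (ev t) (x ᵥ* U) = - (x t * br σ (x ᵥ* U) (ev r)) := by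
    intro r
    have := br_three σ x (ev t) (x ᵥ* U) (ev r) hx
    have e : x ⬝ᵥ (x ᵥ* U) = 0 := by rw [dotProduct_comm, ← Matrix.dotProduct_mulVec]; exact hU
    rw [e] at this
    simp only [dotProduct_single, mul_one] at this
    rw [br_swap σ (ev r)] at this
    linear_combination this
  have h5 : br σ τ (V *ᵥ x) = ∑ r, x r * br σ τ (fun s => V s r) := by
    rw [mulVec_eq_sum_smul V x]; simp
  have h6 : (x ⬝ᵥ τ) * br σ (U *ᵥ cv σ (ev t)) (V *ᵥ x) =
      - (x t * ∑ r, br σ (x ᵥ* U) (ev r) * br σ τ (fun s => V s r)) := by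
    rw [h3, h5, Finset.sum_mul, Finset.mul_sum, ← Finset.sum_neg_distrib]
    refine Finset.sum_congr rfl (fun r _ => ?_)
    linear_combination br σ τ (fun s => V s r) * h4 r
  rw [h2, h6, dot_Gm]; ring

theorem x_mul_Delta (σ : Matrix (Fin (m + 2)) (Fin m) A)
    (U V : Matrix (Fin (m + 2)) (Fin (m + 2)) A) (x : Fin (m + 2) → A)
    (hx : x ᵥ* σ = 0) (hU : x ⬝ᵥ U *ᵥ x = 0) (hV : x ⬝ᵥ V *ᵥ x = 0) (t : Fin (m + 2)) :
    x t * br σ (U *ᵥ x) (V *ᵥ x) = 0 := by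
  have := br_three σ x (U *ᵥ x) (V *ᵥ x) (ev t) hx
  rw [hU, hV] at this
  simp only [dotProduct_single, mul_one] at this
  linear_combination this

theorem br_map {A' : Type*} [CommRing A'] (f : A →+* A') (σ : Matrix (Fin (m + 2)) (Fin m) A)
    (w w' : Fin (m + 2) → A) :
    br (σ.map f) (fun t => f (w t)) (fun t => f (w' t)) = f (br σ w w') := by
  rw [br_apply, br_apply, RingHom.map_det]
  congr 1
  ext i j
  refine Fin.cases ?_ (fun i => ?_) i
  · simp [brMat]
  · refine Fin.cases ?_ (fun i => ?_) i <;> simp [brMat]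

theorem ev_map {A' : Type*} [CommRing A'] (f : A →+* A') (t : Fin (m + 2)) :
    (fun s => f ((ev t : Fin (m + 2) → A) s)) = ev t := by
  ext s; simp [ev, Pi.single_apply]

theorem Gm_map {A' : Type*} [CommRing A'] (f : A →+* A') (σ : Matrix (Fin (m + 2)) (Fin m) A)
    (U V : Matrix (Fin (m + 2)) (Fin (m + 2)) A) (τ : Fin (m + 2) → A) (t) :
    Gm (σ.map f) (U.map f) (V.map f) (fun t => f (τ t)) t = f (Gm σ U V τ t) := by
  have hc : cv (σ.map f) (fun t => f (τ t)) = fun s => f (cv σ τ s) := by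
    ext s
    rw [cv_apply, cv_apply, ← br_map, ev_map]
  have hm : (U.map f) *ᵥ (fun s => f (cv σ τ s)) = fun s => f ((U *ᵥ cv σ τ) s) := by
    ext s; simp [Matrix.mulVec, dotProduct]
  rw [Gm_apply, Gm_apply, hc, hm, map_add, map_sum, ← br_map]
  congr 1
  refine Finset.sum_congr rfl (fun r _ => ?_)
  rw [map_mul, ← br_map, ← br_map, ev_map]
  rfl

end PartTwo

section PartThree
open MvPolynomial

theorem wiebe1 {D : Type*} [CommRing D] [IsDomain D] {u v w1 z1 w2 z2 b : D}
    (huv : Cop u v) (hq : Cop (u * w1 + v * z1) (u * w2 + v * z2))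
    (h1 : u * b ∈ Ideal.span {u * w1 + v * z1, u * w2 + v * z2})
    (h2 : v * b ∈ Ideal.span {u * w1 + v * z1, u * w2 + v * z2}) :
    ∃ r r' c, b = r * (u * w1 + v * z1) + r' * (u * w2 + v * z2) + c * (w1 * z2 - z1 * w2) := by
  rw [Ideal.mem_span_pair] at h1 h2
  obtain ⟨l1, l2, h1⟩ := h1
  obtain ⟨m1, m2, h2⟩ := h2
  obtain ⟨c, hc1, hc2⟩ := hq.split (x := v * l1 - u * m1) (y := u * m2 - v * l2)
    (by linear_combination v * h1 - u * h2)
  obtain ⟨r, hr⟩ := huv.2 (l1 - c * z2) ⟨m1 + c * w2, by linear_combination hc2⟩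
  obtain ⟨r', hr'⟩ := huv.2 (l2 + c * z1) ⟨m2 - c * w1, by linear_combination -hc1⟩
  refine ⟨r, r', c, mul_left_cancel₀ huv.1 ?_⟩
  linear_combination -h1 + (u * w1 + v * z1) * hr + (u * w2 + v * z2) * hr'

theorem wiebe2 {D : Type*} [CommRing D] [IsDomain D] {u v w1 z1 w2 z2 t : D}
    (hu : Prime u) (hq : Cop (u * w1 + v * z1) (u * w2 + v * z2))
    (h1 : t * (w1 * z2 - z1 * w2) ∈ Ideal.span {u * w1 + v * z1, u * w2 + v * z2}) :
    t ∈ Ideal.span {u, v} := by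
  rw [Ideal.mem_span_pair] at h1
  obtain ⟨l1, l2, h1⟩ := h1
  obtain ⟨c, hc1, hc2⟩ := hq.split (x := t * z2 - u * l1) (y := t * z1 + u * l2)
    (by linear_combination -u * h1)
  have e1 : u ∣ (t - c * v) * z1 := ⟨c * w1 - l2, by linear_combination hc1⟩
  have e2 : u ∣ (t - c * v) * z2 := ⟨c * w2 + l1, by linear_combination hc2⟩
  have key : u ∣ t - c * v := by
    by_contra hcon
    obtain ⟨a, ha⟩ := (hu.dvd_or_dvd e1).resolve_left hcon
    obtain ⟨b, hb⟩ := (hu.dvd_or_dvd e2).resolve_left hcon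
    have hq1 : u * w1 + v * z1 = u * (w1 + v * a) := by rw [ha]; ring
    have hq2 : u * w2 + v * z2 = u * (w2 + v * b) := by rw [hb]; ring
    rw [hq1, hq2] at hq
    obtain ⟨c', hc'⟩ := hq.2 (w1 + v * a) ⟨w2 + v * b, by ring⟩
    have hne : w1 + v * a ≠ 0 := right_ne_zero_of_mul hq.1
    apply hu.not_isUnit
    refine IsUnit.of_mul_eq_one c' (mul_left_cancel₀ hne ?_)
    linear_combination -hc'
  obtain ⟨a, ha⟩ := key
  rw [Ideal.mem_span_pair]
  exact ⟨a, c, by linear_combination -ha⟩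

section graded
variable {O : Type*} [CommRing O]

theorem hcomp_mul {ι : Type*} (r q : MvPolynomial ι O) {e : ℕ} (hq : q.IsHomogeneous e) (j : ℕ) :
    homogeneousComponent j (r * q) = if e ≤ j then homogeneousComponent (j - e) r * q else 0 := by
  classical
  conv_lhs => rw [← sum_homogeneousComponent r]
  rw [Finset.sum_mul, map_sum]
  have : ∀ i, homogeneousComponent j (homogeneousComponent i r * q) =
      if j = i + e then homogeneousComponent i r * q else 0 := fun i =>
    homogeneousComponent_of_mem ((homogeneousComponent_isHomogeneous i r).mul hq)
  simp only [this]
  split_ifs with h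
  · have h2 : ∀ i, (j = i + e) ↔ (i = j - e) := by intro i; omega
    simp only [h2]
    rw [Finset.sum_ite_eq']
    split_ifs with h3
    · rfl
    · rw [homogeneousComponent_eq_zero, zero_mul]
      simp at h3; omega
  · refine Finset.sum_eq_zero (fun i _ => ?_)
    rw [if_neg (by omega)]

theorem hcomp_self {ι : Type*} {b : MvPolynomial ι O} {j : ℕ} (hb : b.IsHomogeneous j) :
    homogeneousComponent j b = b := by
  rw [homogeneousComponent_of_mem hb, if_pos rfl]

theorem mem_span_XX (c : MvPolynomial (Fin 2) O) :
    c - C (coeff 0 c) ∈ Ideal.span {X 0, X 1} := by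
  have h : ({X 0, X 1} : Set (MvPolynomial (Fin 2) O)) = X '' Set.univ := by
    ext p; simp [Set.mem_insert_iff, eq_comm]
  rw [h, mem_ideal_span_X_image]
  intro m hm
  by_contra hcon
  push Not at hcon
  have : m = 0 := by ext i; exact hcon i trivial
  subst this
  simp at hm

theorem homog_pos_mem {c : MvPolynomial (Fin 2) O} {j : ℕ} (hc : c.IsHomogeneous j) (hj : 1 ≤ j) :
    c ∈ Ideal.span {X 0, X 1} := by
  have h := mem_span_XX c
  have h0 : coeff 0 c = 0 := by
    by_contra hcon
    have := hc hcon
    simp at this; omega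
  simpa [h0] using h

theorem C_mem_span_XX {a : O} (h : (C a : MvPolynomial (Fin 2) O) ∈ Ideal.span {X 0, X 1}) :
    a = 0 := by
  rw [Ideal.mem_span_pair] at h
  obtain ⟨r, s, h⟩ := h
  have := congrArg (eval 0) h
  simpa using this.symm

variable [IsDomain O]

theorem prime_X0 : Prime (X 0 : MvPolynomial (Fin 2) O) := MvPolynomial.X_prime

theorem cop_XX : Cop (X 0 : MvPolynomial (Fin 2) O) (X 1) := by
  refine ⟨prime_X0.ne_zero, fun h hh => (prime_X0.dvd_or_dvd hh).resolve_left ?_⟩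
  rw [X_dvd_X]; simp

/-- set-up for the local statement -/
structure Setup (w1 z1 w2 z2 : MvPolynomial (Fin 2) O) : Prop where
  hw1 : w1.IsHomogeneous 1
  hz1 : z1.IsHomogeneous 1
  hw2 : w2.IsHomogeneous 1
  hz2 : z2.IsHomogeneous 1
  cop : Cop (X 0 * w1 + X 1 * z1) (X 0 * w2 + X 1 * z2)

variable {w1 z1 w2 z2 : MvPolynomial (Fin 2) O}

/-- the ideal Q -/
abbrev QI (w1 z1 w2 z2 : MvPolynomial (Fin 2) O) : Ideal (MvPolynomial (Fin 2) O) :=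
  Ideal.span {X 0 * w1 + X 1 * z1, X 0 * w2 + X 1 * z2}

theorem mul_Delta_mem {c : MvPolynomial (Fin 2) O} (hc : c ∈ Ideal.span {X 0, X 1}) :
    c * (w1 * z2 - z1 * w2) ∈ QI w1 z1 w2 z2 := by
  rw [Ideal.mem_span_pair] at hc ⊢
  obtain ⟨a, b, rfl⟩ := hc
  exact ⟨a * z2 - b * w2, b * w1 - a * z1, by ring⟩

theorem Setup.wiebe (h : Setup w1 z1 w2 z2) {b : MvPolynomial (Fin 2) O}
    (h1 : X 0 * b ∈ QI w1 z1 w2 z2) (h2 : X 1 * b ∈ QI w1 z1 w2 z2) :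
    ∃ r r' c, b = r * (X 0 * w1 + X 1 * z1) + r' * (X 0 * w2 + X 1 * z2)
      + c * (w1 * z2 - z1 * w2) := wiebe1 cop_XX h.cop h1 h2

theorem Setup.homog (h : Setup w1 z1 w2 z2) : (X 0 * w1 + X 1 * z1).IsHomogeneous 2 ∧
    (X 0 * w2 + X 1 * z2).IsHomogeneous 2 ∧ (w1 * z2 - z1 * w2).IsHomogeneous 2 :=
  ⟨((isHomogeneous_X _ _).mul h.hw1).add ((isHomogeneous_X _ _).mul h.hz1),
   ((isHomogeneous_X _ _).mul h.hw2).add ((isHomogeneous_X _ _).mul h.hz2),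
   (h.hw1.mul h.hz2).sub (h.hz1.mul h.hw2)⟩

theorem Setup.deg1 (h : Setup w1 z1 w2 z2) {b : MvPolynomial (Fin 2) O} (hb : b.IsHomogeneous 1)
    (h1 : X 0 * b ∈ QI w1 z1 w2 z2) (h2 : X 1 * b ∈ QI w1 z1 w2 z2) : b = 0 := by
  obtain ⟨r, r', c, e⟩ := h.wiebe h1 h2
  obtain ⟨a1, a2, a3⟩ := h.homog
  rw [← hcomp_self hb, e, map_add, map_add, hcomp_mul _ _ a1, hcomp_mul _ _ a2, hcomp_mul _ _ a3]
  simp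

theorem Setup.deg3' (h : Setup w1 z1 w2 z2) {b : MvPolynomial (Fin 2) O} {j : ℕ} (hj : 3 ≤ j)
    (hb : b.IsHomogeneous j)
    (h1 : X 0 * b ∈ QI w1 z1 w2 z2) (h2 : X 1 * b ∈ QI w1 z1 w2 z2) : b ∈ QI w1 z1 w2 z2 := by
  obtain ⟨r, r', c, e⟩ := h.wiebe h1 h2
  obtain ⟨a1, a2, a3⟩ := h.homog
  rw [← hcomp_self hb, e, map_add, map_add, hcomp_mul _ _ a1, hcomp_mul _ _ a2, hcomp_mul _ _ a3,
    if_pos (by omega), if_pos (by omega), if_pos (by omega)]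
  refine Ideal.add_mem _ (Ideal.add_mem _ ?_ ?_) ?_
  · exact Ideal.mul_mem_left _ _ (Ideal.subset_span (by simp))
  · exact Ideal.mul_mem_left _ _ (Ideal.subset_span (by simp))
  · exact mul_Delta_mem (homog_pos_mem (homogeneousComponent_isHomogeneous _ _) (by omega))

theorem Setup.deg3 (h : Setup w1 z1 w2 z2) (N : ℕ) : ∀ {b : MvPolynomial (Fin 2) O} {j : ℕ}
    (_ : 3 ≤ j) (_ : b.IsHomogeneous j)
    (_ : ∀ r ∈ (Ideal.span {X 0, X 1} : Ideal (MvPolynomial (Fin 2) O)) ^ N,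
      r * b ∈ QI w1 z1 w2 z2), b ∈ QI w1 z1 w2 z2 := by
  induction N with
  | zero =>
    intro b j hj hb hN
    simpa using hN 1 (by simp)
  | succ N ih =>
    intro b j hj hb hN
    refine h.deg3' hj hb (ih (j := 1 + j) (by omega) ((isHomogeneous_X _ _).mul hb) ?_)
      (ih (j := 1 + j) (by omega) ((isHomogeneous_X _ _).mul hb) ?_)
    · intro r hr
      rw [← mul_assoc]
      exact hN _ (by rw [pow_succ]; exact Ideal.mul_mem_mul hr (Ideal.subset_span (by simp)))
    · intro r hr
      rw [← mul_assoc]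
      exact hN _ (by rw [pow_succ]; exact Ideal.mul_mem_mul hr (Ideal.subset_span (by simp)))

theorem Setup.deg2 (h : Setup w1 z1 w2 z2) (N : ℕ) {b : MvPolynomial (Fin 2) O}
    (hb : b.IsHomogeneous 2)
    (hN : ∀ r ∈ (Ideal.span {X 0, X 1} : Ideal (MvPolynomial (Fin 2) O)) ^ N,
      r * b ∈ QI w1 z1 w2 z2) : ∃ α : O, b - C α * (w1 * z2 - z1 * w2) ∈ QI w1 z1 w2 z2 := by
  have hX : ∀ i, X i * b ∈ QI w1 z1 w2 z2 := by
    intro i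
    refine h.deg3 N (j := 1 + 2) (by omega) ((isHomogeneous_X _ _).mul hb) ?_
    intro r hr
    rw [mul_left_comm]
    exact Ideal.mul_mem_left _ _ (hN r hr)
  obtain ⟨r, r', c, e⟩ := h.wiebe (hX 0) (hX 1)
  refine ⟨coeff 0 c, ?_⟩
  have : b - C (coeff 0 c) * (w1 * z2 - z1 * w2) = r * (X 0 * w1 + X 1 * z1) +
      r' * (X 0 * w2 + X 1 * z2) + (c - C (coeff 0 c)) * (w1 * z2 - z1 * w2) := by
    rw [e]; ring
  rw [this]
  refine Ideal.add_mem _ (Ideal.add_mem _ ?_ ?_) (mul_Delta_mem (mem_span_XX c))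
  · exact Ideal.mul_mem_left _ _ (Ideal.subset_span (by simp))
  · exact Ideal.mul_mem_left _ _ (Ideal.subset_span (by simp))

end graded
end PartThree

section PartFour
open MvPolynomial Matrix

variable {O : Type*} [CommRing O] {m : ℕ}

/-- the point `x̄` -/
def xb (σ : Matrix (Fin (m + 2)) (Fin m) O) (fi : O) (i j : Fin (m + 2)) :
    Fin (m + 2) → MvPolynomial (Fin 2) O :=
  fun t => C (fi * br σ (ev t) (ev j)) * X 0 + C (fi * br σ (ev i) (ev t)) * X 1

variable (σ : Matrix (Fin (m + 2)) (Fin m) O) (U V : Matrix (Fin (m + 2)) (Fin (m + 2)) O)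
  (fi : O) (i j : Fin (m + 2))

/-- base change to polynomials -/
abbrev Cm {p q : Type*} (M : Matrix p q O) : Matrix p q (MvPolynomial (Fin 2) O) :=
  M.map (C : O →+* MvPolynomial (Fin 2) O)

theorem xb_homog (t) : (xb σ fi i j t).IsHomogeneous 1 :=
  ((isHomogeneous_C_mul_X _ _)).add (isHomogeneous_C_mul_X _ _)

theorem xb_dot (a : Fin (m + 2) → O) :
    xb σ fi i j ⬝ᵥ (fun t => C (a t)) =
      C (fi * br σ a (ev j)) * X 0 + C (fi * br σ (ev i) a) * X 1 := by
  rw [br_left_sum σ (ev j) a, br_right_sum σ (ev i) a]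
  simp only [dotProduct, xb, map_mul, map_sum, Finset.mul_sum, Finset.sum_mul,
    ← Finset.sum_add_distrib]
  refine Finset.sum_congr rfl (fun t _ => ?_)
  ring

theorem xb_sigma : xb σ fi i j ᵥ* Cm σ = 0 := by
  ext1 l
  have := xb_dot σ fi i j (fun t => σ t l)
  rw [br_col, br_swap, br_col] at this
  simp only [neg_zero, mul_zero, map_zero, zero_mul, add_zero] at this
  exact this

variable (hfi : fi * br σ (ev i) (ev j) = 1)
include hfi

theorem xb_i : xb σ fi i j i = X 0 := by
  simp only [xb, hfi, br_self, mul_zero, map_one, map_zero, one_mul, zero_mul, add_zero]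

theorem xb_j : xb σ fi i j j = X 1 := by
  simp only [xb, hfi, br_self, mul_zero, map_one, map_zero, one_mul, zero_mul, zero_add]

theorem xb_dot_eq (w : Fin (m + 2) → MvPolynomial (Fin 2) O) :
    xb σ fi i j ⬝ᵥ w = X 0 * (C fi * br (Cm σ) w (ev j)) + X 1 * (C fi * br (Cm σ) (ev i) w) := by
  have h := br_three (Cm σ) (xb σ fi i j) (ev i) (ev j) w (xb_sigma σ fi i j)
  simp only [dotProduct_single, mul_one, xb_i σ fi i j hfi, xb_j σ fi i j hfi] at h
  have hc : C fi * br (Cm σ) (ev i) (ev j) = 1 := by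
    have := br_map (C : O →+* MvPolynomial (Fin 2) O) σ (ev i) (ev j)
    rw [ev_map, ev_map] at this
    rw [this, ← map_mul, hfi, map_one]
  linear_combination C fi * h - (xb σ fi i j ⬝ᵥ w) * hc

theorem Delta_eq (w w' : Fin (m + 2) → MvPolynomial (Fin 2) O) :
    (C fi * br (Cm σ) w (ev j)) * (C fi * br (Cm σ) (ev i) w') -
      (C fi * br (Cm σ) (ev i) w) * (C fi * br (Cm σ) w' (ev j)) = C fi * br (Cm σ) w w' := by
  have hc : C fi * br (Cm σ) (ev i) (ev j) = 1 := by
    have := br_map (C : O →+* MvPolynomial (Fin 2) O) σ (ev i) (ev j)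
    rw [ev_map, ev_map] at this
    rw [this, ← map_mul, hfi, map_one]
  obtain ⟨p, hp⟩ := br_cramer (Cm σ) (ev i) (ev j) w'
  have := congrArg (br (Cm σ) w) hp
  simp only [map_add, map_smul, smul_eq_mul, br_mulVec_right, add_zero] at this
  rw [br_swap _ (ev i) w]
  linear_combination (- (C fi)^2) * this + C fi * br (Cm σ) w w' * hc

theorem vec_mem_of_xb (a : Fin (m + 2) → O) (h : xb σ fi i j ⬝ᵥ (fun t => C (a t)) = 0) :
    ∃ p, a = σ *ᵥ p := by
  rw [xb_dot] at h
  have h0 : fi * br σ a (ev j) = 0 := by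
    have := congrArg (eval (Pi.single 0 1 : Fin 2 → O)) h
    simpa using this
  have h1 : fi * br σ (ev i) a = 0 := by
    have := congrArg (eval (Pi.single 1 1 : Fin 2 → O)) h
    simpa using this
  obtain ⟨p, hp⟩ := br_cramer σ (ev i) (ev j) a
  refine ⟨fi • p, ?_⟩
  have := congrArg (fun v => fi • v) hp
  simp only [smul_add, smul_smul, hfi, h0, h1, zero_smul, zero_add, one_smul] at this
  rw [this, Matrix.mulVec_smul]

/-- abbreviations for the forms `w`, `z` -/
abbrev wf (σ : Matrix (Fin (m + 2)) (Fin m) O) (U : Matrix (Fin (m + 2)) (Fin (m + 2)) O)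
    (fi : O) (i j : Fin (m + 2)) : MvPolynomial (Fin 2) O :=
  C fi * br (Cm σ) (Cm U *ᵥ xb σ fi i j) (ev j)

/-- abbreviations for the forms `w`, `z` -/
abbrev zf (σ : Matrix (Fin (m + 2)) (Fin m) O) (U : Matrix (Fin (m + 2)) (Fin (m + 2)) O)
    (fi : O) (i j : Fin (m + 2)) : MvPolynomial (Fin 2) O :=
  C fi * br (Cm σ) (ev i) (Cm U *ᵥ xb σ fi i j)

omit hfi in
theorem Uxb_homog (t) : ((Cm U *ᵥ xb σ fi i j) t).IsHomogeneous 1 := by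
  refine IsHomogeneous.sum _ _ _ (fun s _ => ?_)
  have := (isHomogeneous_C (Fin 2) (U t s)).mul (xb_homog σ fi i j s)
  simpa using this

omit hfi in
theorem wf_homog : (wf σ U fi i j).IsHomogeneous 1 := by
  rw [wf, br_left_sum]
  have h1 : (∑ s, (Cm U *ᵥ xb σ fi i j) s * br (Cm σ) (ev s) (ev j)).IsHomogeneous 1 := by
    refine IsHomogeneous.sum _ _ _ (fun s _ => ?_)
    have h := br_map (C : O →+* MvPolynomial (Fin 2) O) σ (ev s) (ev j)
    rw [ev_map, ev_map] at h
    rw [h]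
    exact (Uxb_homog σ U fi i j s).mul (isHomogeneous_C _ _)
  simpa using (isHomogeneous_C (Fin 2) fi).mul h1

omit hfi in
theorem zf_homog : (zf σ U fi i j).IsHomogeneous 1 := by
  rw [zf, br_right_sum]
  have h1 : (∑ s, (Cm U *ᵥ xb σ fi i j) s * br (Cm σ) (ev i) (ev s)).IsHomogeneous 1 := by
    refine IsHomogeneous.sum _ _ _ (fun s _ => ?_)
    have h := br_map (C : O →+* MvPolynomial (Fin 2) O) σ (ev i) (ev s)
    rw [ev_map, ev_map] at h
    rw [h]
    exact (Uxb_homog σ U fi i j s).mul (isHomogeneous_C _ _)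
  simpa using (isHomogeneous_C (Fin 2) fi).mul h1

omit hfi in
/-- Lemma A modulo an ideal containing both quadrics -/
theorem lemmaA_mod {A : Type*} [CommRing A] (Q : Ideal A) (σ : Matrix (Fin (m + 2)) (Fin m) A)
    (U V : Matrix (Fin (m + 2)) (Fin (m + 2)) A) (x τ : Fin (m + 2) → A)
    (hx : ∀ l, (x ᵥ* σ) l ∈ Q) (hU : x ⬝ᵥ U *ᵥ x ∈ Q) (hV : x ⬝ᵥ V *ᵥ x ∈ Q) (t : Fin (m + 2)) :
    x t * (x ⬝ᵥ Gm σ U V τ) - br σ τ (ev t) * br σ (U *ᵥ x) (V *ᵥ x) ∈ Q ∧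
    x t * br σ (U *ᵥ x) (V *ᵥ x) ∈ Q := by
  let g := Ideal.Quotient.mk Q
  have mv : ∀ M : Matrix (Fin (m + 2)) (Fin (m + 2)) A,
      M.map g *ᵥ (fun t => g (x t)) = fun t => g ((M *ᵥ x) t) := by
    intro M; ext t; simp [Matrix.mulVec, dotProduct]
  have dp : ∀ w : Fin (m + 2) → A, (fun t => g (x t)) ⬝ᵥ (fun t => g (w t)) = g (x ⬝ᵥ w) := by
    intro M; simp [dotProduct]
  have h1 : (fun t => g (x t)) ᵥ* σ.map g = 0 := by
    ext l
    have : ((fun t => g (x t)) ᵥ* σ.map g) l = g ((x ᵥ* σ) l) := by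
      simp [Matrix.vecMul, dotProduct]
    rw [this]; exact Ideal.Quotient.eq_zero_iff_mem.2 (hx l)
  have h2 : (fun t => g (x t)) ⬝ᵥ U.map g *ᵥ (fun t => g (x t)) = 0 := by
    rw [mv, dp]; exact Ideal.Quotient.eq_zero_iff_mem.2 hU
  have h3 : (fun t => g (x t)) ⬝ᵥ V.map g *ᵥ (fun t => g (x t)) = 0 := by
    rw [mv, dp]; exact Ideal.Quotient.eq_zero_iff_mem.2 hV
  have hA := lemmaA (σ.map g) (U.map g) (V.map g) (fun t => g (x t)) (fun t => g (τ t)) h1 h2 h3 t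
  have hB := x_mul_Delta (σ.map g) (U.map g) (V.map g) (fun t => g (x t)) h1 h2 h3 t
  have hG : Gm (σ.map g) (U.map g) (V.map g) (fun t => g (τ t)) =
      fun t => g (Gm σ U V τ t) := by
    ext t; exact Gm_map g σ U V τ t
  rw [hG, dp, mv, mv, br_map, ← ev_map g, br_map, ← map_mul, ← map_mul] at hA
  rw [mv, mv, br_map, ← map_mul] at hB
  exact ⟨Ideal.Quotient.eq.1 hA, Ideal.Quotient.eq_zero_iff_mem.1 hB⟩

variable [IsDomain O]

/-- the ideal of the two quadrics -/
abbrev QQ (σ : Matrix (Fin (m + 2)) (Fin m) O) (U V : Matrix (Fin (m + 2)) (Fin (m + 2)) O)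
    (fi : O) (i j : Fin (m + 2)) : Ideal (MvPolynomial (Fin 2) O) :=
  Ideal.span {xb σ fi i j ⬝ᵥ (Cm U *ᵥ xb σ fi i j), xb σ fi i j ⬝ᵥ (Cm V *ᵥ xb σ fi i j)}

omit [IsDomain O] in
theorem QQ_eq : QQ σ U V fi i j =
    QI (wf σ U fi i j) (zf σ U fi i j) (wf σ V fi i j) (zf σ V fi i j) := by
  rw [QQ, xb_dot_eq σ fi i j hfi, xb_dot_eq σ fi i j hfi]

variable (hcop : Cop (xb σ fi i j ⬝ᵥ (Cm U *ᵥ xb σ fi i j)) (xb σ fi i j ⬝ᵥ (Cm V *ᵥ xb σ fi i j)))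
include hcop

omit [IsDomain O] in
theorem setup_of_cop : Setup (wf σ U fi i j) (zf σ U fi i j) (wf σ V fi i j) (zf σ V fi i j) := by
  refine ⟨wf_homog σ U fi i j, zf_homog σ U fi i j, wf_homog σ V fi i j, zf_homog σ V fi i j, ?_⟩
  rwa [xb_dot_eq σ fi i j hfi, xb_dot_eq σ fi i j hfi] at hcop

omit hfi hcop [IsDomain O] in
theorem lemmaA_loc (τ : Fin (m + 2) → O) (t) :
    xb σ fi i j t * (xb σ fi i j ⬝ᵥ (fun s => C (Gm σ U V τ s))) -
      C (br σ τ (ev t)) * br (Cm σ) (Cm U *ᵥ xb σ fi i j) (Cm V *ᵥ xb σ fi i j) ∈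
        QQ σ U V fi i j := by
  have h := (lemmaA_mod (QQ σ U V fi i j) (Cm σ) (Cm U) (Cm V) (xb σ fi i j) (fun t => C (τ t))
    (fun l => by rw [xb_sigma]; exact Ideal.zero_mem _) (Ideal.subset_span (by simp))
    (Ideal.subset_span (by simp)) t).1
  have hG : Gm (Cm σ) (Cm U) (Cm V) (fun t => C (τ t)) = fun t => C (Gm σ U V τ t) := by
    ext1 t; exact Gm_map _ σ U V τ t
  rw [hG] at h
  have hb := br_map (C : O →+* MvPolynomial (Fin 2) O) σ τ (ev t)
  rw [ev_map] at hb
  rw [hb] at h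
  exact h

theorem local_two (τ : Fin (m + 2) → O)
    (h : xb σ fi i j ⬝ᵥ (fun s => C (Gm σ U V τ s)) ∈ QQ σ U V fi i j) (t) :
    br σ τ (ev t) = 0 := by
  have S := setup_of_cop σ U V fi i j hfi hcop
  have h1 := lemmaA_loc σ U V fi i j τ t
  have h2 := (Submodule.sub_mem_iff_right _ (Ideal.mul_mem_left _ _ h)).1 h1
  have h3 : C (br σ τ (ev t)) * (C fi * br (Cm σ) (Cm U *ᵥ xb σ fi i j) (Cm V *ᵥ xb σ fi i j)) ∈
      QQ σ U V fi i j := by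
    rw [mul_left_comm]; exact Ideal.mul_mem_left _ _ h2
  rw [← Delta_eq σ fi i j hfi, QQ_eq σ U V fi i j hfi] at h3
  exact C_mem_span_XX (wiebe2 prime_X0 S.cop h3)

theorem local_one (a : Fin (m + 2) → O) (N : ℕ)
    (ha : ∀ r ∈ (Ideal.span {X 0, X 1} : Ideal (MvPolynomial (Fin 2) O)) ^ N,
      r * (xb σ fi i j ⬝ᵥ (fun t => C (a t))) ∈ QQ σ U V fi i j) :
    ∃ τ p, a = Gm σ U V τ + σ *ᵥ p := by
  have S := setup_of_cop σ U V fi i j hfi hcop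
  set Δ := br (Cm σ) (Cm U *ᵥ xb σ fi i j) (Cm V *ᵥ xb σ fi i j) with hΔ
  have hlin : ∀ a : Fin (m + 2) → O, (xb σ fi i j ⬝ᵥ (fun t => C (a t))).IsHomogeneous 1 := by
    intro a
    refine IsHomogeneous.sum _ _ _ (fun s _ => ?_)
    exact (xb_homog σ fi i j s).mul (isHomogeneous_C _ _)
  have key : ∀ l : Fin 2, ∃ α : O,
      X l * (xb σ fi i j ⬝ᵥ (fun t => C (a t))) - C α * (C fi * Δ) ∈ QQ σ U V fi i j := by
    intro l
    rw [hΔ, ← Delta_eq σ fi i j hfi, QQ_eq σ U V fi i j hfi]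
    refine S.deg2 N ((isHomogeneous_X _ _).mul (hlin a)) ?_
    intro r hr
    rw [mul_left_comm, ← QQ_eq σ U V fi i j hfi]
    exact Ideal.mul_mem_left _ _ (ha r hr)
  obtain ⟨α, hα⟩ := key 0
  obtain ⟨β, hβ⟩ := key 1
  let τ : Fin (m + 2) → O := (fi * fi * β) • ev i - (fi * fi * α) • ev j
  have t1 : br σ τ (ev i) = fi * α := by
    simp only [τ, map_sub, map_smul, LinearMap.sub_apply, LinearMap.smul_apply, br_self,
      smul_eq_mul]
    rw [br_swap σ (ev j) (ev i)]
    linear_combination fi * α * hfi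
  have t2 : br σ τ (ev j) = fi * β := by
    simp only [τ, map_sub, map_smul, LinearMap.sub_apply, LinearMap.smul_apply, br_self,
      smul_eq_mul]
    linear_combination fi * β * hfi
  have g1 := lemmaA_loc σ U V fi i j τ i
  have g2 := lemmaA_loc σ U V fi i j τ j
  rw [t1, xb_i σ fi i j hfi, ← hΔ] at g1
  rw [t2, xb_j σ fi i j hfi, ← hΔ] at g2
  have e : xb σ fi i j ⬝ᵥ (fun t => C ((a - Gm σ U V τ) t)) =
      xb σ fi i j ⬝ᵥ (fun t => C (a t)) - xb σ fi i j ⬝ᵥ (fun t => C (Gm σ U V τ t)) := by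
    rw [← dotProduct_sub]; congr 1; ext1 t; simp
  have z := S.deg1 (hlin (a - Gm σ U V τ)) (by
      rw [← QQ_eq σ U V fi i j hfi, e]
      convert Ideal.sub_mem _ hα g1 using 1
      rw [map_mul]; ring) (by
      rw [← QQ_eq σ U V fi i j hfi, e]
      convert Ideal.sub_mem _ hβ g2 using 1
      rw [map_mul]; ring)
  obtain ⟨p, hp⟩ := vec_mem_of_xb σ fi i j hfi _ z
  exact ⟨τ, p, by rw [← hp]; simp⟩

end PartFour

section PartFive
open Matrix

variable {A : Type*} [CommRing A] [IsDomain A] {m : ℕ}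

theorem sigma_inj (σ : Matrix (Fin (m + 2)) (Fin m) A) (w w' : Fin (m + 2) → A)
    (h : br σ w w' ≠ 0) (p : Fin m → A) (hp : σ *ᵥ p = 0) : p = 0 := by
  have h1 : (brMat σ w w')ᵀ.det ≠ 0 := by rwa [det_transpose]
  have h2 : (brMat σ w w')ᵀ *ᵥ (Fin.cons 0 (Fin.cons 0 p)) = 0 := by
    rw [mulVec_eq_sum_smul, Fin.sum_univ_succ, Fin.sum_univ_succ]
    simp only [Fin.cons_zero, Fin.cons_succ, zero_smul, zero_add]
    rw [mulVec_eq_sum_smul] at hp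
    exact hp
  have h3 := eq_zero_of_mulVec_eq_zero h1 h2
  ext l
  have := congrFun h3 l.succ.succ
  simpa using this

theorem cop_vec {f g : A} (h : Cop f g) {ι : Type*} {x y : ι → A} (e : f • x = g • y) :
    ∃ c, y = f • c ∧ x = g • c := by
  have : ∀ l, ∃ c, y l = c * f ∧ x l = c * g := fun l => h.split (by
    have := congrFun e l
    simp only [Pi.smul_apply, smul_eq_mul] at this
    linear_combination this)
  choose c hc using this
  exact ⟨c, by ext l; rw [(hc l).1]; simp [mul_comm], by ext l; rw [(hc l).2]; simp [mul_comm]⟩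

variable [UniqueFactorizationMonoid A] [IsNoetherianRing A]

theorem exists_br_ne_zero (σ : Matrix (Fin (m + 2)) (Fin m) A)
    (hI : ∀ P : Ideal A, P.IsPrime → (∀ i j, br σ (ev i) (ev j) ∈ P) → 3 ≤ P.height) :
    ∃ i j, br σ (ev i) (ev j) ≠ 0 := by
  by_contra hcon
  push Not at hcon
  have := hI ⊥ Ideal.isPrime_bot (fun i j => by rw [hcon]; exact Ideal.zero_mem _)
  simp [Ideal.height_bot] at this

theorem coker_tf_aux (σ : Matrix (Fin (m + 2)) (Fin m) A)
    (hI : ∀ P : Ideal A, P.IsPrime → (∀ i j, br σ (ev i) (ev j) ∈ P) → 3 ≤ P.height)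
    (w : Fin (m + 2) → A) (hw : ∀ t, br σ w (ev t) = 0) : ∃ p, w = σ *ᵥ p := by
  obtain ⟨i, j, hij⟩ := exists_br_ne_zero σ hI
  let D : Ideal A := (LinearMap.range σ.mulVecLin).comap (LinearMap.toSpanSingleton A _ w)
  have hD : ∀ s, s ∈ D ↔ ∃ p, σ *ᵥ p = s • w := by
    intro s; simp [D]
  obtain ⟨f, hf, g, hg, hfg⟩ := exists_cop D (fun P hP hDP => by
    refine le_trans (by decide) (hI P hP (fun i j => hDP ?_))
    rw [hD]
    obtain ⟨p, hp⟩ := br_cramer σ (ev i) (ev j) w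
    refine ⟨p, ?_⟩
    rw [hp, hw j, br_swap σ (ev i) w, hw i]; simp)
  obtain ⟨p, hp⟩ := (hD f).1 hf
  obtain ⟨q, hq⟩ := (hD g).1 hg
  have h0 : f • q - g • p = 0 := sigma_inj σ _ _ hij _ (by
    rw [mulVec_sub, mulVec_smul, mulVec_smul, hp, hq, smul_smul, smul_smul, mul_comm, sub_self])
  obtain ⟨c, hc, -⟩ := cop_vec hfg (sub_eq_zero.1 h0)
  refine ⟨c, ?_⟩
  rw [hc, mulVec_smul] at hp
  exact (smul_right_injective _ hfg.1 hp).symm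

theorem coker_tf (σ : Matrix (Fin (m + 2)) (Fin m) A)
    (hI : ∀ P : Ideal A, P.IsPrime → (∀ i j, br σ (ev i) (ev j) ∈ P) → 3 ≤ P.height)
    (w : Fin (m + 2) → A) (f : A) (hf : f ≠ 0) (p : Fin m → A) (hp : f • w = σ *ᵥ p) :
    ∃ p, w = σ *ᵥ p := by
  refine coker_tf_aux σ hI w (fun t => ?_)
  have := congrArg (fun v => br σ v (ev t)) hp
  simp only [map_smul, LinearMap.smul_apply, br_mulVec_left, smul_eq_mul] at this
  exact (mul_eq_zero.1 this).resolve_left hf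

theorem glue (hQ : QProp A) (σ : Matrix (Fin (m + 2)) (Fin m) A)
    (hI : ∀ P : Ideal A, P.IsPrime → (∀ i j, br σ (ev i) (ev j) ∈ P) → 3 ≤ P.height)
    (G : (Fin (m + 2) → A) →ₗ[A] (Fin (m + 2) → A)) (hG : ∀ p, G (σ *ᵥ p) = 0)
    (K3 : ∀ τ p, G τ = σ *ᵥ p → ∃ q, τ = σ *ᵥ q)
    (a : Fin (m + 2) → A)
    (hloc : ∀ i j, br σ (ev i) (ev j) ≠ 0 →
      ∃ (M : ℕ) (τ : _) (p : _), br σ (ev i) (ev j) ^ M • a = G τ + σ *ᵥ p) :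
    ∃ τ p, a = G τ + σ *ᵥ p := by
  obtain ⟨i, j, hij⟩ := exists_br_ne_zero σ hI
  let D : Ideal A := (LinearMap.range G ⊔ LinearMap.range σ.mulVecLin).comap
    (LinearMap.toSpanSingleton A _ a)
  have hD : ∀ s, s ∈ D ↔ ∃ τ p, s • a = G τ + σ *ᵥ p := by
    intro s
    simp only [D, Submodule.mem_comap, LinearMap.toSpanSingleton_apply, Submodule.mem_sup,
      LinearMap.mem_range]
    constructor
    · rintro ⟨_, ⟨τ, rfl⟩, _, ⟨p, rfl⟩, h⟩
      exact ⟨τ, p, h.symm⟩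
    · rintro ⟨τ, p, h⟩
      exact ⟨_, ⟨τ, rfl⟩, _, ⟨p, rfl⟩, h.symm⟩
  have hDh : ∀ P : Ideal A, P.IsPrime → D ≤ P → 3 ≤ P.height := by
    intro P hP hDP
    refine hI P hP (fun i j => ?_)
    by_cases h0 : br σ (ev i) (ev j) = 0
    · rw [h0]; exact Ideal.zero_mem _
    · obtain ⟨M, τ, p, h⟩ := hloc i j h0
      exact hP.mem_of_pow_mem M (hDP ((hD _).2 ⟨τ, p, h⟩))
  have comm : ∀ (f g : A) τf τg pf pg, f • a = G τf + σ *ᵥ pf → g • a = G τg + σ *ᵥ pg →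
      ∃ p, f • τg - g • τf = σ *ᵥ p := by
    intro f g τf τg pf pg h1 h2
    refine K3 _ (g • pf - f • pg) ?_
    rw [map_sub, map_smul, map_smul, mulVec_sub, mulVec_smul, mulVec_smul,
      eq_sub_of_add_eq h1.symm, eq_sub_of_add_eq h2.symm, smul_sub, smul_sub, smul_smul,
      smul_smul, mul_comm g f]
    abel
  obtain ⟨f, hf, g, hg, hfg⟩ := exists_cop D (fun P hP hDP =>
    le_trans (by decide) (hDh P hP hDP))
  obtain ⟨τf, pf, hf'⟩ := (hD f).1 hf
  obtain ⟨τg, pg, hg'⟩ := (hD g).1 hg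
  obtain ⟨p, hp⟩ := comm f g τf τg pf pg hf' hg'
  have hmem : ∀ l, p l ∈ Ideal.span {f, g} := by
    intro l
    refine hQ D f g (p l) hDh hfg hf hg ?_
    intro h hh
    obtain ⟨τh, ph, hh'⟩ := (hD h).1 hh
    obtain ⟨p', hp'⟩ := comm f h τf τh pf ph hf' hh'
    obtain ⟨p'', hp''⟩ := comm g h τg τh pg ph hg' hh'
    have h0 : h • p - (g • p' - f • p'') = 0 := sigma_inj σ _ _ hij _ (by
      rw [mulVec_sub, mulVec_sub, mulVec_smul, mulVec_smul, mulVec_smul, ← hp, ← hp', ← hp'']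
      simp only [smul_sub, smul_smul]
      rw [mul_comm g f, mul_comm h f, mul_comm h g]
      abel)
    have := congrFun (sub_eq_zero.1 h0) l
    simp only [Pi.smul_apply, Pi.sub_apply, smul_eq_mul] at this
    rw [this, Ideal.mem_span_pair]
    exact ⟨- p'' l, p' l, by ring⟩
  simp only [Ideal.mem_span_pair] at hmem
  choose q r hqr using hmem
  have hpqr : p = f • q + g • r := by
    ext l; rw [← hqr l]; simp [mul_comm]
  have e1 : f • (τg - σ *ᵥ q) = g • (τf + σ *ᵥ r) := by
    rw [smul_sub, smul_add, ← mulVec_smul, ← mulVec_smul, sub_eq_iff_eq_add, add_assoc,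
      ← mulVec_add, add_comm (g • r), ← hpqr, ← hp]
    abel
  obtain ⟨τ, hτ, -⟩ := cop_vec hfg e1
  have e2 : f • (a - G τ) = σ *ᵥ pf := by
    have := congrArg G hτ
    rw [map_add, hG, add_zero, map_smul] at this
    rw [smul_sub, hf', ← this]; abel
  obtain ⟨p', hp'⟩ := coker_tf σ hI _ f hfg.1 _ e2
  exact ⟨τ, p', by rw [← hp']; abel⟩

theorem field_br_ne_zero {K : Type*} [Field K] (σ : Matrix (Fin (m + 2)) (Fin m) K)
    (f : Fin m → Fin (m + 2)) (g : Fin m → Fin m) (h : (σ.submatrix f g).det ≠ 0) :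
    ∃ i j, br σ (ev i) (ev j) ≠ 0 := by
  by_contra hcon
  push Not at hcon
  have hz : ∀ w w', br σ w w' = 0 := by
    intro w w'
    rw [br_left_sum]
    refine Finset.sum_eq_zero (fun s _ => ?_)
    rw [br_right_sum]
    simp [hcon]
  have hg : Function.Injective g := by
    intro a b hab
    by_contra hne
    exact h (det_zero_of_column_eq hne (fun k => by simp [hab]))
  have hgb := Finite.injective_iff_bijective.1 hg
  have hli : LinearIndependent K (fun (l : Fin m) (t : Fin (m + 2)) => σ t l) := by
    rw [Fintype.linearIndependent_iff]
    intro p hp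
    have hp' : σ *ᵥ p = 0 := by rw [mulVec_eq_sum_smul]; exact hp
    have h2 : (σ.submatrix f g) *ᵥ (p ∘ g) = 0 := by
      ext l
      have := congrFun hp' (f l)
      simp only [mulVec, dotProduct] at this ⊢
      rw [← (Equiv.ofBijective g hgb).sum_comp] at this
      exact this
    have h3 := eq_zero_of_mulVec_eq_zero h h2
    intro l
    obtain ⟨l', rfl⟩ := hgb.2 l
    exact congrFun h3 l'
  have ex : ∀ {c : ℕ} (_ : c < m + 2) (v : Fin c → Fin (m + 2) → K),
      ∃ w, w ∉ Submodule.span K (Set.range v) := by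
    intro c hc v
    by_contra hcon
    push Not at hcon
    have ht : Submodule.span K (Set.range v) = ⊤ := by
      rw [eq_top_iff]; intro x _; exact hcon x
    have h1 := finrank_range_le_card (R := K) (b := v)
    rw [Set.finrank, ht] at h1
    simp at h1
    omega
  obtain ⟨w', hw'⟩ := ex (by omega) (fun (l : Fin m) (t : Fin (m + 2)) => σ t l)
  have hli2 := linearIndependent_finCons.2 ⟨hli, hw'⟩
  obtain ⟨w, hw⟩ := ex (by omega)
    (Fin.cons w' (fun (l : Fin m) (t : Fin (m + 2)) => σ t l) : Fin (m + 1) → Fin (m + 2) → K)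
  have hli3 := linearIndependent_finCons.2 ⟨hli2, hw⟩
  have hu : IsUnit (brMat σ w w') := Matrix.linearIndependent_rows_iff_isUnit.1 hli3
  rw [Matrix.isUnit_iff_isUnit_det] at hu
  exact hu.ne_zero (hz w w')

omit [IsDomain A] [UniqueFactorizationMonoid A] [IsNoetherianRing A] in
theorem minor_mem (σ : Matrix (Fin (m + 2)) (Fin m) A) (P : Ideal A) [P.IsPrime]
    (hP : ∀ i j, br σ (ev i) (ev j) ∈ P) (f : Fin m → Fin (m + 2)) (g : Fin m → Fin m) :
    (σ.submatrix f g).det ∈ P := by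
  by_contra hcon
  let h : A →+* FractionRing (A ⧸ P) := (algebraMap (A ⧸ P) _).comp (Ideal.Quotient.mk P)
  have hk : ∀ x, h x = 0 ↔ x ∈ P := by
    intro x
    rw [RingHom.comp_apply, FaithfulSMul.algebraMap_eq_zero_iff, Ideal.Quotient.eq_zero_iff_mem]
  obtain ⟨i, j, hij⟩ := field_br_ne_zero (σ.map h) f g (by
    rw [Matrix.submatrix_map]
    have := RingHom.map_det h (σ.submatrix f g)
    rw [RingHom.mapMatrix_apply] at this
    rw [← this]
    exact fun h0 => hcon ((hk _).1 h0))
  apply hij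
  have := br_map h σ (ev i) (ev j)
  rw [ev_map, ev_map] at this
  rw [this, hk]
  exact hP i j

end PartFive

section PartSix
open MvPolynomial Matrix

variable {A : Type*} [CommRing A] {m : ℕ}

/-- base change to polynomials in `x` -/
abbrev Dm {p q : Type*} (M : Matrix p q A) : Matrix p q (MvPolynomial (Fin (m + 2)) A) :=
  M.map (C : A →+* MvPolynomial (Fin (m + 2)) A)

/-- the generic point -/
abbrev xg : Fin (m + 2) → MvPolynomial (Fin (m + 2)) A := fun t => X t

/-- the ideal of the symmetric algebra -/
def LT (σ : Matrix (Fin (m + 2)) (Fin m) A) (U V : Matrix (Fin (m + 2)) (Fin (m + 2)) A) :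
    Ideal (MvPolynomial (Fin (m + 2)) A) :=
  Ideal.span (Set.range (xg ᵥ* Dm (m := m) σ) ∪
    {xg ⬝ᵥ (Dm (m := m) U *ᵥ xg), xg ⬝ᵥ (Dm (m := m) V *ᵥ xg)})

/-- `ρ` : polynomials in two variables to polynomials in `x` -/
def rho (i j : Fin (m + 2)) : MvPolynomial (Fin 2) A →ₐ[A] MvPolynomial (Fin (m + 2)) A :=
  aeval (fun l : Fin 2 => if l = 0 then X i else X j)

theorem reduce_two (σ : Matrix (Fin (m + 2)) (Fin m) A) (i j : Fin (m + 2))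
    (z : MvPolynomial (Fin (m + 2)) A) :
    ∃ (N : ℕ) (z0 : MvPolynomial (Fin 2) A),
      C (br σ (ev i) (ev j)) ^ N * z - rho i j z0 ∈
        Ideal.span (Set.range (xg ᵥ* Dm (m := m) σ)) := by
  set f := br σ (ev i) (ev j) with hf
  set L' := Ideal.span (Set.range (xg ᵥ* Dm (m := m) σ)) with hL'
  induction z using MvPolynomial.induction_on with
  | C a => exact ⟨0, C a, by simp [rho]⟩
  | add p q hp hq =>
    obtain ⟨N1, z1, h1⟩ := hp
    obtain ⟨N2, z2, h2⟩ := hq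
    refine ⟨N1 + N2, C (f ^ N2) * z1 + C (f ^ N1) * z2, ?_⟩
    have := L'.add_mem (L'.mul_mem_left (C (f ^ N2)) h1) (L'.mul_mem_left (C (f ^ N1)) h2)
    convert this using 1
    simp only [rho, map_add, map_mul, algHom_C, algebraMap_eq, map_pow]
    ring
  | mul_X p t hp =>
    obtain ⟨N1, z1, h1⟩ := hp
    obtain ⟨p', hp'⟩ := br_cramer (Dm (m := m) σ) (ev i) (ev j) (ev t)
    have hb : ∀ a b : Fin (m + 2), br (Dm (m := m) σ) (ev a) (ev b) = C (br σ (ev a) (ev b)) := by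
      intro a b
      have := br_map (C : A →+* MvPolynomial (Fin (m + 2)) A) σ (ev a) (ev b)
      rwa [ev_map, ev_map] at this
    have h3 := congrArg (fun v => xg ⬝ᵥ v) hp'
    simp only [dotProduct_add, dotProduct_smul, dotProduct_single, hb, mul_one,
      dotProduct_mulVec, smul_eq_mul] at h3
    have h4 : (xg ᵥ* Dm (m := m) σ) ⬝ᵥ p' ∈ L' :=
      L'.sum_mem (fun l _ => L'.mul_mem_right _ (Ideal.subset_span ⟨l, rfl⟩))
    refine ⟨N1 + 1, z1 * (C (br σ (ev t) (ev j)) * X 0 + C (br σ (ev i) (ev t)) * X 1), ?_⟩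
    have h5 := L'.add_mem (L'.mul_mem_left (C f * X t) h1) (L'.mul_mem_left (rho i j z1) h4)
    convert h5 using 1
    have hr : rho i j (z1 * (C (br σ (ev t) (ev j)) * X 0 + C (br σ (ev i) (ev t)) * X 1)) =
        rho i j z1 * (C (br σ (ev t) (ev j)) * X i + C (br σ (ev i) (ev t)) * X j) := by
      simp [rho, algHom_C]
    rw [hr]
    rw [← hf] at h3
    linear_combination rho i j z1 * h3

variable {O : Type*} [CommRing O] [Algebra A O]

/-- the map to polynomials in two variables over the localization -/
def theta (σ : Matrix (Fin (m + 2)) (Fin m) A) (fi : O) (i j : Fin (m + 2)) :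
    MvPolynomial (Fin (m + 2)) A →+* MvPolynomial (Fin 2) O :=
  eval₂Hom ((C : O →+* MvPolynomial (Fin 2) O).comp (algebraMap A O))
    (xb (σ.map (algebraMap A O)) fi i j)

variable (σ : Matrix (Fin (m + 2)) (Fin m) A) (U V : Matrix (Fin (m + 2)) (Fin (m + 2)) A)
  (fi : O) (i j : Fin (m + 2))

theorem theta_C (a : A) : theta σ fi i j (C a) = C (algebraMap A O a) := by simp [theta]

theorem theta_X (t) : theta σ fi i j (X t) = xb (σ.map (algebraMap A O)) fi i j t := by
  simp [theta]

theorem theta_dot (a : Fin (m + 2) → A) : theta σ fi i j (xg ⬝ᵥ (fun t => C (a t))) =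
    xb (σ.map (algebraMap A O)) fi i j ⬝ᵥ (fun t => C (algebraMap A O (a t))) := by
  simp only [dotProduct, map_sum, map_mul, theta_C, theta_X]

theorem theta_sigma (l) : theta σ fi i j ((xg ᵥ* Dm (m := m) σ) l) = 0 := by
  have := congrFun (xb_sigma (σ.map (algebraMap A O)) fi i j) l
  rw [Pi.zero_apply] at this
  rw [← this]
  exact theta_dot σ fi i j (fun t => σ t l)

theorem theta_quad : theta σ fi i j (xg ⬝ᵥ (Dm (m := m) U *ᵥ xg)) =
    xb (σ.map (algebraMap A O)) fi i j ⬝ᵥ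
      (Cm (U.map (algebraMap A O)) *ᵥ xb (σ.map (algebraMap A O)) fi i j) := by
  simp only [dotProduct, Matrix.mulVec, map_sum, map_mul, theta_C, theta_X, Matrix.map_apply]

theorem theta_LT {z} (hz : z ∈ LT σ U V) : theta σ fi i j z ∈
    QQ (σ.map (algebraMap A O)) (U.map (algebraMap A O)) (V.map (algebraMap A O)) fi i j := by
  have : LT σ U V ≤ (QQ (σ.map (algebraMap A O)) (U.map (algebraMap A O))
      (V.map (algebraMap A O)) fi i j).comap (theta σ fi i j) := by
    rw [LT, Ideal.span_le]
    rintro _ (⟨l, rfl⟩ | h | h)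
    · simp only [SetLike.mem_coe, Ideal.mem_comap, theta_sigma]; exact Ideal.zero_mem _
    · rw [h]; simp only [SetLike.mem_coe, Ideal.mem_comap, theta_quad]
      exact Ideal.subset_span (by simp)
    · rw [h]; simp only [SetLike.mem_coe, Ideal.mem_comap, theta_quad]
      exact Ideal.subset_span (by simp)
  exact this hz

variable (hfi : fi * algebraMap A O (br σ (ev i) (ev j)) = 1)
include hfi

theorem hfi' : fi * br (σ.map (algebraMap A O)) (ev i) (ev j) = 1 := by
  have := br_map (algebraMap A O) σ (ev i) (ev j)
  rw [ev_map, ev_map] at this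
  rw [this, hfi]

theorem theta_rho (z : MvPolynomial (Fin 2) A) :
    theta σ fi i j (rho i j z) = MvPolynomial.map (algebraMap A O) z := by
  have : (theta σ fi i j).comp (rho (A := A) i j).toRingHom =
      MvPolynomial.map (algebraMap A O) := by
    apply MvPolynomial.ringHom_ext
    · intro a; simp [rho, theta_C, algHom_C]
    · intro l
      have h := hfi' σ fi i j hfi
      fin_cases l
      · simp [rho, theta_X, xb_i _ _ _ _ h]
      · simp [rho, theta_X, xb_j _ _ _ _ h]
  exact RingHom.congr_fun this z

variable (hinj : Function.Injective (algebraMap A O))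
include hinj

theorem theta_ker {z} (hz : theta σ fi i j z = 0) : ∃ N : ℕ,
    C (br σ (ev i) (ev j)) ^ N * z ∈ Ideal.span (Set.range (xg ᵥ* Dm (m := m) σ)) := by
  obtain ⟨N, z0, h⟩ := reduce_two σ i j z
  refine ⟨N, ?_⟩
  have h1 : theta σ fi i j (C (br σ (ev i) (ev j)) ^ N * z - rho i j z0) = 0 := by
    have : Ideal.span (Set.range (xg ᵥ* Dm (m := m) σ)) ≤
        RingHom.ker (theta σ fi i j) := by
      rw [Ideal.span_le]
      rintro _ ⟨l, rfl⟩
      exact theta_sigma σ fi i j l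
    exact this h
  rw [map_sub, map_mul, hz, mul_zero, zero_sub, neg_eq_zero, theta_rho σ fi i j hfi] at h1
  have h2 : z0 = 0 := map_injective _ hinj (by rw [h1, map_zero])
  simpa [h2] using h

attribute [local instance] MvPolynomial.algebraMvPolynomial in
theorem theta_height [IsNoetherianRing A] [IsLocalization.Away (br σ (ev i) (ev j)) O]
    (h : MvPolynomial (Fin 2) O) (hh : Prime h) :
    ((Ideal.span {h}).comap (theta σ fi i j)).height ≤ ((m + 1 : ℕ) : ℕ∞) := by
  classical
  set f := br σ (ev i) (ev j) with hf
  have hspr : (Ideal.span {h}).IsPrime := (Ideal.span_singleton_prime hh.ne_zero).2 hh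
  have hunit : ∀ N : ℕ, IsUnit (theta σ fi i j (C f ^ N)) := by
    intro N
    rw [map_pow, theta_C]
    refine ((IsUnit.of_mul_eq_one fi ?_).map C).pow N
    rw [mul_comm]; exact hfi
  have lift : ∀ c : MvPolynomial (Fin 2) O, ∃ (K : ℕ) (c' : MvPolynomial (Fin (m + 2)) A),
      theta σ fi i j c' = theta σ fi i j (C f ^ K) * c := by
    intro c
    obtain ⟨⟨c0, ⟨_, ⟨_, ⟨K, rfl⟩, rfl⟩⟩⟩, hc⟩ := IsLocalization.surj
      ((Submonoid.powers f).map (C : A →+* MvPolynomial (Fin 2) A)) c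
    refine ⟨K, rho i j c0, ?_⟩
    rw [theta_rho σ fi i j hfi, map_pow, theta_C]
    simp only [MvPolynomial.algebraMap_def] at hc
    rw [← hc]
    simp [mul_comm]
  obtain ⟨M, h', hh'⟩ := lift h
  set P := (Ideal.span {h}).comap (theta σ fi i j) with hP
  have hPpr : P.IsPrime := Ideal.comap_isPrime _ _
  let s : Finset (MvPolynomial (Fin (m + 2)) A) :=
    insert h' (Finset.univ.image (xg ᵥ* Dm (m := m) σ))
  have hs : (s : Set (MvPolynomial (Fin (m + 2)) A)) =
      insert h' (Set.range (xg ᵥ* Dm (m := m) σ)) := by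
    simp [s]
  have hmin : P ∈ (Ideal.span (s : Set (MvPolynomial (Fin (m + 2)) A))).minimalPrimes := by
    rw [hs]
    refine ⟨⟨hPpr, ?_⟩, ?_⟩
    · rw [Ideal.span_le]
      rintro _ (rfl | ⟨l, rfl⟩)
      · rw [hP, SetLike.mem_coe, Ideal.mem_comap, hh']
        exact Ideal.mul_mem_left _ _ (Ideal.mem_span_singleton_self h)
      · rw [hP, SetLike.mem_coe, Ideal.mem_comap, theta_sigma]
        exact Ideal.zero_mem _
    · rintro P' ⟨hP', hle⟩ hPP y hy
      have hfP : C f ∉ P' := by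
        intro hcon
        have h1 := hPP hcon
        rw [hP, Ideal.mem_comap] at h1
        have h2 := hunit 1
        rw [pow_one] at h2
        exact hspr.ne_top (Ideal.eq_top_of_isUnit_mem _ h1 h2)
      rw [hP, Ideal.mem_comap, Ideal.mem_span_singleton] at hy
      obtain ⟨c, hc⟩ := hy
      obtain ⟨K, c', hc'⟩ := lift c
      obtain ⟨N, hN⟩ := theta_ker σ fi i j hfi hinj (z := C f ^ M * C f ^ K * y - h' * c') (by
        rw [map_sub, map_mul, map_mul, map_mul, hh', hc', hc]; ring)
      have h1 := hle (Ideal.span_mono (Set.subset_insert _ _) hN)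
      have h2 : h' * c' ∈ P' := P'.mul_mem_right _ (hle (Ideal.subset_span (Set.mem_insert _ _)))
      have h3 := (hP'.mem_or_mem h1).resolve_left (fun hc => hfP (hP'.mem_of_pow_mem _ hc))
      have h4 := (Submodule.sub_mem_iff_left _ h2).1 h3
      rw [← pow_add] at h4
      exact (hP'.mem_or_mem h4).resolve_left (fun hc => hfP (hP'.mem_of_pow_mem _ hc))
  refine (Ideal.height_le_card_of_mem_minimalPrimes_span_finset hmin).trans ?_
  have hcard : s.card ≤ m + 1 := by
    refine (Finset.card_insert_le _ _).trans (Nat.succ_le_succ ?_)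
    refine Finset.card_image_le.trans (by simp)
  exact_mod_cast hcard

theorem theta_cop [IsNoetherianRing A] [IsLocalization.Away (br σ (ev i) (ev j)) O]
    [IsDomain O] [UniqueFactorizationMonoid O]
    (H2 : ∀ P : Ideal (MvPolynomial (Fin (m + 2)) A), P.IsPrime → LT σ U V ≤ P →
      ((m + 2 : ℕ) : ℕ∞) ≤ P.height) :
    Cop (xb (σ.map (algebraMap A O)) fi i j ⬝ᵥ
        (Cm (U.map (algebraMap A O)) *ᵥ xb (σ.map (algebraMap A O)) fi i j))
      (xb (σ.map (algebraMap A O)) fi i j ⬝ᵥ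
        (Cm (V.map (algebraMap A O)) *ᵥ xb (σ.map (algebraMap A O)) fi i j)) := by
  set q1 := xb (σ.map (algebraMap A O)) fi i j ⬝ᵥ
        (Cm (U.map (algebraMap A O)) *ᵥ xb (σ.map (algebraMap A O)) fi i j) with hq1
  set q2 := xb (σ.map (algebraMap A O)) fi i j ⬝ᵥ
        (Cm (V.map (algebraMap A O)) *ᵥ xb (σ.map (algebraMap A O)) fi i j) with hq2
  have key : ∀ h, Prime h → h ∣ q1 → ¬ h ∣ q2 := by
    intro h hh h1 h2
    have hspr : (Ideal.span {h}).IsPrime := (Ideal.span_singleton_prime hh.ne_zero).2 hh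
    have a1 := theta_height σ fi i j hfi hinj h hh
    have a2 := H2 ((Ideal.span {h}).comap (theta σ fi i j)) (Ideal.comap_isPrime _ _) (by
      intro z hz
      have := theta_LT σ U V fi i j hz
      rw [Ideal.mem_comap]
      refine (Ideal.span_le.2 ?_) this
      rintro _ (h | h)
      · rw [h]; exact Ideal.mem_span_singleton.2 h1
      · rw [h]; exact Ideal.mem_span_singleton.2 h2)
    have a3 := a2.trans a1
    have : m + 2 ≤ m + 1 := by exact_mod_cast a3
    omega
  have hnu : ¬ IsUnit q2 := by
    intro hu
    have h1 := hu.map (eval (0 : Fin 2 → O))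
    have : eval (0 : Fin 2 → O) q2 = 0 := by
      rw [hq2]
      simp [dotProduct, xb]
    rw [this] at h1
    exact not_isUnit_zero h1
  refine cop_of_no_prime ?_ key
  intro h0
  by_cases h2 : q2 = 0
  · exact key (X 0) prime_X0 (by rw [h0]; exact dvd_zero _) (by rw [h2]; exact dvd_zero _)
  · obtain ⟨p, hp, hpd⟩ := WfDvdMonoid.exists_irreducible_factor hnu h2
    exact key p hp.prime (by rw [h0]; exact dvd_zero _) hpd

end PartSix

section PartSixB
open MvPolynomial Matrix
variable {A : Type*} [CommRing A] [IsDomain A] [UniqueFactorizationMonoid A] [IsNoetherianRing A]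
  {m : ℕ} (σ : Matrix (Fin (m + 2)) (Fin m) A) (U V : Matrix (Fin (m + 2)) (Fin (m + 2)) A)

theorem main_K3
    (hI : ∀ P : Ideal A, P.IsPrime → (∀ i j, br σ (ev i) (ev j) ∈ P) → 3 ≤ P.height)
    (H2 : ∀ P : Ideal (MvPolynomial (Fin (m + 2)) A), P.IsPrime → LT σ U V ≤ P →
      ((m + 2 : ℕ) : ℕ∞) ≤ P.height)
    (τ : Fin (m + 2) → A) (p : Fin m → A) (h : Gm σ U V τ = σ *ᵥ p) : ∃ q, τ = σ *ᵥ q := by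
  obtain ⟨i, j, hij⟩ := exists_br_ne_zero σ hI
  let O := Localization.Away (br σ (ev i) (ev j))
  have : IsDomain O := IsLocalization.isDomain_localization
    (powers_le_nonZeroDivisors_of_noZeroDivisors hij)
  have hinj : Function.Injective (algebraMap A O) :=
    IsLocalization.injective O (powers_le_nonZeroDivisors_of_noZeroDivisors hij)
  obtain ⟨fi, hfi⟩ := (IsLocalization.Away.algebraMap_isUnit (S := O)
    (br σ (ev i) (ev j))).exists_left_inv
  have hcop := theta_cop σ U V fi i j hfi hinj H2
  refine coker_tf_aux σ hI τ (fun t => hinj ?_)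
  have h1 := local_two (σ.map (algebraMap A O)) (U.map (algebraMap A O)) (V.map (algebraMap A O))
    fi i j (hfi' σ fi i j hfi) hcop (fun t => algebraMap A O (τ t)) (by
      have : (fun s => (C (Gm (σ.map (algebraMap A O)) (U.map (algebraMap A O))
          (V.map (algebraMap A O)) (fun t => algebraMap A O (τ t)) s) : MvPolynomial (Fin 2) O)) =
          fun s => C (algebraMap A O ((σ *ᵥ p) s)) := by
        ext1 s; rw [Gm_map, h]
      rw [this, ← theta_dot]
      have h2 : (xg ⬝ᵥ fun t => C ((σ *ᵥ p) t)) =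
          (xg ᵥ* Dm (m := m) σ) ⬝ᵥ (fun l => C (p l)) := by
        rw [← dotProduct_mulVec]
        congr 1
        ext1 t
        simp [mulVec, dotProduct]
      rw [h2]
      simp only [dotProduct, map_sum, map_mul, theta_sigma, zero_mul, Finset.sum_const_zero]
      exact Ideal.zero_mem _) t
  have h3 := br_map (algebraMap A O) σ τ (ev t)
  rw [ev_map] at h3
  rw [← h3, h1, map_zero]

theorem main_gen (hQ : QProp A)
    (hI : ∀ P : Ideal A, P.IsPrime → (∀ i j, br σ (ev i) (ev j) ∈ P) → 3 ≤ P.height)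
    (H2 : ∀ P : Ideal (MvPolynomial (Fin (m + 2)) A), P.IsPrime → LT σ U V ≤ P →
      ((m + 2 : ℕ) : ℕ∞) ≤ P.height)
    (a : Fin (m + 2) → A) (N : ℕ)
    (ha : ∀ r ∈ (Ideal.span (Set.range X) : Ideal (MvPolynomial (Fin (m + 2)) A)) ^ N,
      r * (xg ⬝ᵥ (fun t => C (a t))) ∈ LT σ U V) : ∃ τ p, a = Gm σ U V τ + σ *ᵥ p := by
  refine glue hQ σ hI (Gm σ U V) (Gm_mulVec σ U V) (main_K3 σ U V hI H2) a ?_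
  intro i j hij
  let O := Localization.Away (br σ (ev i) (ev j))
  have : IsDomain O := IsLocalization.isDomain_localization
    (powers_le_nonZeroDivisors_of_noZeroDivisors hij)
  have hinj : Function.Injective (algebraMap A O) :=
    IsLocalization.injective O (powers_le_nonZeroDivisors_of_noZeroDivisors hij)
  obtain ⟨fi, hfi⟩ := (IsLocalization.Away.algebraMap_isUnit (S := O)
    (br σ (ev i) (ev j))).exists_left_inv
  have hcop := theta_cop σ U V fi i j hfi hinj H2
  have hfi2 := hfi' σ fi i j hfi
  obtain ⟨τ', p', h⟩ := local_one (σ.map (algebraMap A O)) (U.map (algebraMap A O))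
    (V.map (algebraMap A O)) fi i j hfi2 hcop (fun t => algebraMap A O (a t)) N (by
      set Q := QQ (σ.map (algebraMap A O)) (U.map (algebraMap A O))
        (V.map (algebraMap A O)) fi i j
      rw [← theta_dot]
      set b := xg ⬝ᵥ (fun t => (C (a t) : MvPolynomial (Fin (m + 2)) A)) with hb
      let K : Ideal (MvPolynomial (Fin 2) O) := Submodule.comap
        (LinearMap.toSpanSingleton (MvPolynomial (Fin 2) O) _ (theta σ fi i j b)) Q
      suffices hK : (Ideal.span {X 0, X 1} : Ideal (MvPolynomial (Fin 2) O)) ^ N ≤ K from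
        fun r hr => hK hr
      have e : (Ideal.span {X 0, X 1} : Ideal (MvPolynomial (Fin 2) O)) =
          Ideal.map (theta σ fi i j) (Ideal.span {X i, X j}) := by
        rw [Ideal.map_span, Set.image_pair, theta_X, theta_X, xb_i _ _ _ _ hfi2,
          xb_j _ _ _ _ hfi2]
      rw [e, ← Ideal.map_pow, Ideal.map_le_iff_le_comap]
      intro r hr
      rw [Ideal.mem_comap]
      show theta σ fi i j r * theta σ fi i j b ∈ Q
      rw [← map_mul]
      refine theta_LT σ U V fi i j (ha r (Ideal.pow_right_mono ?_ N hr))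
      refine Ideal.span_mono ?_
      rintro _ (rfl | rfl) <;> exact ⟨_, rfl⟩)
  obtain ⟨⟨_, ⟨M, rfl⟩⟩, hM⟩ := IsLocalization.exist_integer_multiples_of_finite
    (Submonoid.powers (br σ (ev i) (ev j))) (Sum.elim τ' p')
  have hτ : ∀ t, ∃ y, algebraMap A O y = (br σ (ev i) (ev j)) ^ M • τ' t := fun t => hM (Sum.inl t)
  have hp : ∀ t, ∃ y, algebraMap A O y = (br σ (ev i) (ev j)) ^ M • p' t := fun t => hM (Sum.inr t)
  choose τ hτ using hτ
  choose p hp using hp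
  refine ⟨M, τ, p, ?_⟩
  ext t
  apply hinj
  have e1 := congrFun h t
  have e2 := Gm_map (algebraMap A O) σ U V τ t
  have e3 : (fun t => algebraMap A O (τ t)) = algebraMap A O (br σ (ev i) (ev j) ^ M) • τ' := by
    ext1 t; rw [hτ, Algebra.smul_def]; rfl
  have e4 : (fun t => algebraMap A O (p t)) = algebraMap A O (br σ (ev i) (ev j) ^ M) • p' := by
    ext1 t; rw [hp, Algebra.smul_def]; rfl
  have e5 : algebraMap A O ((σ *ᵥ p) t) =
      (σ.map (algebraMap A O) *ᵥ (fun t => algebraMap A O (p t))) t := by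
    simp [mulVec, dotProduct]
  rw [Pi.add_apply, map_add, ← e2, e5, e3, e4, map_smul, mulVec_smul, Pi.smul_apply,
    Pi.smul_apply, Pi.smul_apply, smul_eq_mul, smul_eq_mul, smul_eq_mul, map_mul, e1, Pi.add_apply]
  ring

end PartSixB

section PartSeven
open MvPolynomial Matrix

variable {R : Type*} [CommRing R] {κ : Type*} [Field κ]

/-- linear form attached to a vector -/
def lf {S : Type*} [CommRing S] {n : ℕ} : (Fin n → S) →ₗ[S] MvPolynomial (Fin n) S :=
  ∑ j, (LinearMap.toSpanSingleton S (MvPolynomial (Fin n) S) (X j)).comp (LinearMap.proj j)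

theorem lf_apply {S : Type*} [CommRing S] {n : ℕ} (v : Fin n → S) :
    lf v = ∑ j, C (v j) * X j := by
  simp [lf, LinearMap.sum_apply, smul_eq_C_mul]

/-- coordinate change -/
def chi {n : ℕ} {ι : Type*} [Fintype ι] (b : Module.Basis ι κ (Fin n → κ)) :
    MvPolynomial (Fin n) κ →ₐ[κ] MvPolynomial ι κ :=
  aeval (fun j => ∑ l, C (b.repr (Pi.single j 1) l) * X l)

theorem chi_lf {n : ℕ} {ι : Type*} [Fintype ι] (b : Module.Basis ι κ (Fin n → κ)) (v) :
    chi b (lf v) = ∑ l, C (b.repr v l) * X l := by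
  have hv : v = ∑ j, v j • (Pi.single j 1 : Fin n → κ) := by
    ext i; simp [Finset.sum_apply, Pi.single_apply]
  rw [lf_apply]
  conv_rhs => rw [hv]
  simp only [map_sum, map_mul, chi, aeval_X, algHom_C, algebraMap_eq, map_smul, Finsupp.coe_finsetSum,
    Finset.sum_apply, Finsupp.smul_apply, smul_eq_mul, Finset.mul_sum, Finset.sum_mul]
  rw [Finset.sum_comm]
  simp only [mul_assoc]

theorem chi_basis {n : ℕ} {ι : Type*} [Fintype ι] (b : Module.Basis ι κ (Fin n → κ)) (l) :
    chi b (lf (b l)) = X l := by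
  classical
  rw [chi_lf]
  simp [Finsupp.single_apply, apply_ite C, ite_mul]

theorem chi_inj {n : ℕ} {ι : Type*} [Fintype ι] (b : Module.Basis ι κ (Fin n → κ)) :
    Function.Injective (chi b) := by
  let μ : MvPolynomial ι κ →ₐ[κ] MvPolynomial (Fin n) κ := aeval (fun l => lf (b l))
  have : μ.comp (chi b) = AlgHom.id κ _ := by
    apply MvPolynomial.algHom_ext
    intro j
    have h : ∑ l, b.repr (Pi.single j 1) l • b l = (Pi.single j 1 : Fin n → κ) := b.sum_repr _
    have h2 := congrArg lf h
    simp only [map_sum, map_smul] at h2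
    simp only [AlgHom.comp_apply, chi, aeval_X, map_sum, map_mul, algHom_C, algebraMap_eq, μ,
      AlgHom.id_apply]
    simp only [smul_eq_C_mul] at h2
    rw [h2, lf_apply]
    simp [Pi.single_apply, apply_ite C, ite_mul]
  intro x y hxy
  have h1 := congrArg μ hxy
  rw [← AlgHom.comp_apply, ← AlgHom.comp_apply, this] at h1
  simpa using h1

/-- kill variables -/
def kill {ι : Type*} (S : Set ι) : MvPolynomial ι κ →ₐ[κ] MvPolynomial ι κ := by
  classical exact aeval (fun l => if l ∈ S then 0 else X l)

theorem kill_X {ι : Type*} (S : Set ι) (l : ι) [Decidable (l ∈ S)] :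
    kill (κ := κ) S (X l) = if l ∈ S then 0 else X l := by
  simp only [kill, aeval_X]; congr

theorem kill_kill {ι : Type*} {S S' : Set ι} (h : S ⊆ S') (w) :
    kill (κ := κ) S' (kill S w) = kill S' w := by
  classical
  rw [← AlgHom.comp_apply]
  congr 1
  apply MvPolynomial.algHom_ext
  intro l
  rw [AlgHom.comp_apply, kill_X, kill_X]
  by_cases hl : l ∈ S
  · simp [hl, h hl]
  · simp [hl, kill_X]

theorem kill_empty {ι : Type*} (w) : kill (κ := κ) (∅ : Set ι) w = w := by
  have : kill (κ := κ) (∅ : Set ι) = AlgHom.id κ _ := by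
    classical
    apply MvPolynomial.algHom_ext
    intro l; rw [kill_X]; simp
  rw [this]; rfl

theorem sub_kill_mem {ι : Type*} (S : Set ι) (w : MvPolynomial ι κ) :
    w - kill S w ∈ Ideal.span ((X : ι → MvPolynomial ι κ) '' S) := by
  classical
  rw [← Ideal.Quotient.eq]
  have : (Ideal.Quotient.mkₐ κ (Ideal.span ((X : ι → MvPolynomial ι κ) '' S))) =
     (Ideal.Quotient.mkₐ κ (Ideal.span ((X : ι → MvPolynomial ι κ) '' S))).comp (kill S) := by
    apply MvPolynomial.algHom_ext
    intro l
    rw [AlgHom.comp_apply, kill_X]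
    split_ifs with hl
    · rw [map_zero]
      exact Ideal.Quotient.eq_zero_iff_mem.2 (Ideal.subset_span ⟨l, hl, rfl⟩)
    · rfl
  exact congrArg (fun f => f w) this

theorem exists_lift {n : ℕ} (h : R →+* κ) (hfrac : ∀ a : κ, ∃ s r, h s ≠ 0 ∧ h s * a = h r)
    (w : MvPolynomial (Fin n) κ) :
    ∃ s, h s ≠ 0 ∧ ∃ z, MvPolynomial.map h z = C (h s) * w := by
  induction w using MvPolynomial.induction_on with
  | C a =>
    obtain ⟨s, r, hs, hr⟩ := hfrac a
    exact ⟨s, hs, C r, by rw [map_C, ← C_mul, hr]⟩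
  | add p q hp hq =>
    obtain ⟨s, hs, z, hz⟩ := hp
    obtain ⟨s', hs', z', hz'⟩ := hq
    refine ⟨s * s', by simp [hs, hs'], C s' * z + C s * z', ?_⟩
    simp only [map_add, map_mul, map_C, hz, hz']; ring
  | mul_X p i hp =>
    obtain ⟨s, hs, z, hz⟩ := hp
    exact ⟨s, hs, z * X i, by simp [hz, mul_assoc]⟩

theorem height_fiber [IsNoetherianRing R] {n r : ℕ} (P : Ideal (MvPolynomial (Fin n) R))
    [P.IsPrime] (h : R →+* κ) (hker : RingHom.ker h = P.comap C)
    (hfrac : ∀ a : κ, ∃ s r, h s ≠ 0 ∧ h s * a = h r)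
    (v : Fin r → Fin n → R) (hv : LinearIndependent κ (fun i j => h (v i j)))
    (hP : ∀ i, lf (v i) ∈ P) :
    (P.comap C).height + r ≤ P.height := by
  classical
  set p := P.comap (C : R →+* MvPolynomial (Fin n) R) with hp
  let b := Module.Basis.sumExtend hv
  have hb : ∀ i, b (Sum.inl i) = fun j => h (v i j) := fun i => by
    simp [b, Module.Basis.sumExtend]; rfl
  let : Fintype (Fin r ⊕ Module.Basis.sumExtendIndex hv) := FiniteDimensional.fintypeBasisIndex b
  let Q : Set (Fin r) → Ideal (MvPolynomial (Fin n) R) := fun S =>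
    RingHom.ker ((kill (κ := κ) (Sum.inl '' S)).toRingHom.comp
      ((chi b).toRingHom.comp (MvPolynomial.map h)))
  have hQ : ∀ S z, z ∈ Q S ↔ kill (Sum.inl '' S) (chi b (MvPolynomial.map h z)) = 0 :=
    fun S z => Iff.rfl
  have hQp : ∀ S, (Q S).IsPrime := fun S => RingHom.ker_isPrime _
  have hmlf : ∀ i, MvPolynomial.map h (lf (v i)) = lf (b (Sum.inl i)) := by
    intro i; rw [hb, lf_apply, lf_apply]; simp
  have hchi : ∀ i, chi b (MvPolynomial.map h (lf (v i))) = X (Sum.inl i) := by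
    intro i; rw [hmlf, chi_basis]
  have hpP : ∀ z, MvPolynomial.map h z = 0 → z ∈ P := by
    intro z hz
    have : z ∈ p.map C := by
      rw [mem_map_C_iff]
      intro m
      rw [← hker, RingHom.mem_ker, ← coeff_map, hz, coeff_zero]
    exact Ideal.map_comap_le this
  -- the chain
  have key : ∀ S : Finset (Fin r), p.height + S.card ≤ (Q S).height := by
    intro S
    induction S using Finset.induction_on with
    | empty =>
      have := hQp ((∅ : Finset (Fin r)) : Set (Fin r))
      have : p.IsPrime := Ideal.comap_isPrime _ _
      have hover : (Q ((∅ : Finset (Fin r)) : Set (Fin r))).LiesOver p := by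
        constructor
        ext a
        rw [Ideal.under_def, Ideal.mem_comap (K := Q _), hQ, algebraMap_eq, map_C, ← hker, RingHom.mem_ker]
        simp [Set.image_empty, kill_empty]
      have := Ideal.height_eq_height_add_of_liesOver_of_hasGoingDown p
        (Q ((∅ : Finset (Fin r)) : Set (Fin r)))
      rw [this]; simp
    | insert i S hi ih =>
      have := hQp (S : Set (Fin r))
      have := hQp ((insert i S : Finset (Fin r)) : Set (Fin r))
      have hlt : Q S < Q ((insert i S : Finset (Fin r)) : Set (Fin r)) := by
        rw [SetLike.lt_iff_le_and_exists]
        constructor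
        · intro z hz
          rw [hQ] at hz ⊢
          rw [← kill_kill (S := Sum.inl '' (S : Set (Fin r))), hz, map_zero]
          apply Set.image_mono; simp
        · refine ⟨lf (v i), ?_, ?_⟩
          · rw [hQ, hchi, kill_X, if_pos]; simp
          · rw [hQ, hchi, kill_X, if_neg]
            · exact X_ne_zero _
            · simpa using hi
      have := Ideal.height_add_one_le_of_lt_of_isPrime hlt
      rw [Finset.card_insert_of_notMem hi]
      rw [Nat.cast_add, Nat.cast_one, ← add_assoc]
      exact (add_le_add_left ih 1).trans this
  have hfin : Q ((Finset.univ : Finset (Fin r)) : Set (Fin r)) ≤ P := by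
    intro z hz
    rw [hQ] at hz
    have h1 := sub_kill_mem (κ := κ) (Sum.inl '' ((Finset.univ : Finset (Fin r)) : Set (Fin r)))
      (chi b (MvPolynomial.map h z))
    rw [hz, sub_zero] at h1
    have hclaim : ∀ w ∈ Ideal.span ((X : _ → MvPolynomial (Fin r ⊕ Module.Basis.sumExtendIndex hv) κ) ''
        (Sum.inl '' ((Finset.univ : Finset (Fin r)) : Set (Fin r)))),
        ∃ s, h s ≠ 0 ∧ ∃ z ∈ P, chi b (MvPolynomial.map h z) = C (h s) * w := by
      intro w hw
      induction hw using Submodule.span_induction with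
      | mem x hx =>
        obtain ⟨_, ⟨i, _, rfl⟩, rfl⟩ := hx
        exact ⟨1, by simp, lf (v i), hP i, by rw [hchi]; simp⟩
      | zero => exact ⟨1, by simp, 0, P.zero_mem, by simp⟩
      | add x y _ _ hx hy =>
        obtain ⟨s, hs, z, hzP, hz⟩ := hx
        obtain ⟨s', hs', z', hzP', hz'⟩ := hy
        refine ⟨s * s', by simp [hs, hs'], C s' * z + C s * z',
          P.add_mem (P.mul_mem_left _ hzP) (P.mul_mem_left _ hzP'), ?_⟩
        simp only [map_add, map_mul, map_C, hz, hz', algHom_C, algebraMap_eq]; ring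
      | smul a x _ hx =>
        obtain ⟨s, hs, z, hzP, hz⟩ := hx
        have hsur : ∃ a', chi b a' = a := by
          let μ : MvPolynomial (Fin r ⊕ Module.Basis.sumExtendIndex hv) κ →ₐ[κ]
            MvPolynomial (Fin n) κ := aeval (fun l => lf (b l))
          have : (chi b).comp μ = AlgHom.id κ _ := by
            apply MvPolynomial.algHom_ext
            intro l
            simp [μ, chi_basis]
          exact ⟨μ a, by rw [← AlgHom.comp_apply, this]; rfl⟩
        obtain ⟨a', rfl⟩ := hsur
        obtain ⟨s', hs', y, hy⟩ := exists_lift h hfrac a'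
        refine ⟨s * s', by simp [hs, hs'], y * z, P.mul_mem_left _ hzP, ?_⟩
        simp only [map_mul, hy, hz, algHom_C, algebraMap_eq, smul_eq_mul]; ring
    obtain ⟨s, hs, z', hz', h2⟩ := hclaim _ h1
    have h3 : C s * z - z' ∈ P := by
      apply hpP
      apply chi_inj b
      simp only [map_sub, map_mul, map_C, h2, algHom_C, algebraMap_eq, sub_self, map_zero]
    have h4 : C s * z ∈ P := by
      have := P.add_mem h3 hz'
      simpa using this
    rcases (Ideal.IsPrime.mem_or_mem ‹P.IsPrime› h4) with h5 | h5
    · exact absurd (show h s = 0 by rw [← RingHom.mem_ker, hker]; exact h5) hs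
    · exact h5
  have := key Finset.univ
  simp only [Finset.card_univ, Fintype.card_fin] at this
  exact this.trans (Ideal.height_mono hfin)

end PartSeven

section PartEight
open MvPolynomial Matrix

theorem clear_den {R κ : Type*} [CommRing R] [Field κ] (h : R →+* κ)
    (hfrac : ∀ a : κ, ∃ s r, h s ≠ 0 ∧ h s * a = h r) {d : ℕ} (b : Fin d → κ) :
    ∃ s, h s ≠ 0 ∧ ∃ r : Fin d → R, ∀ i, h s * b i = h (r i) := by
  classical
  choose s r hs hr using fun i => hfrac (b i)
  refine ⟨∏ i, s i, ?_, fun i => (∏ j ∈ Finset.univ.erase i, s j) * r i, ?_⟩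
  · rw [map_prod]; exact Finset.prod_ne_zero_iff.2 fun i _ => hs i
  · intro i
    rw [← Finset.prod_erase_mul _ _ (Finset.mem_univ i), map_mul, map_mul, ← hr]
    ring

theorem rank_zero {R κ : Type*} [CommRing R] [Field κ] (h : R →+* κ)
    (hfrac : ∀ a : κ, ∃ s r, h s ≠ 0 ∧ h s * a = h r) (hinj : Function.Injective h)
    {d n : ℕ} (φ : Matrix (Fin n) (Fin d) R) (hφ : Function.Injective φ.mulVecLin) :
    LinearIndependent κ (fun i j => h (φ j i)) := by
  rw [Fintype.linearIndependent_iff]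
  intro g hg
  obtain ⟨s, hs, r, hr⟩ := clear_den h hfrac g
  have h1 : φ.mulVecLin r = φ.mulVecLin 0 := by
    ext j
    apply hinj
    have := congrFun hg j
    simp only [Finset.sum_apply, Pi.smul_apply, smul_eq_mul, Pi.zero_apply] at this
    simp only [mulVecLin_apply, mulVec_zero, Pi.zero_apply, map_zero, mulVec, dotProduct, map_sum,
      map_mul, ← hr]
    calc _ = h s * ∑ i, g i * h (φ j i) := by
            rw [Finset.mul_sum]; exact Finset.sum_congr rfl fun i _ => by ring
      _ = 0 := by rw [this, mul_zero]
  have h2 := hφ h1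
  intro i
  have h3 := hr i
  rw [h2] at h3
  simp only [Pi.zero_apply, map_zero, mul_eq_zero] at h3
  exact h3.resolve_left hs

theorem rank_pos {R κ : Type} [CommRing R] [Field κ] (h : R →+* κ) (p : Ideal R) [p.IsPrime]
    (hker : RingHom.ker h = p) {d n : ℕ}
    {E : Type} [AddCommGroup E] [Module R E]
    (φ : Matrix (Fin n) (Fin d) R) (π : (Fin n → R) →ₗ[R] E)
    (hsurj : Function.Surjective π)
    (hkerπ : LinearMap.ker π = LinearMap.range φ.mulVecLin)
    (s : Finset (LocalizedModule p.primeCompl E))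
    (hs : Submodule.span (Localization.AtPrime p)
          (s : Set (LocalizedModule p.primeCompl E)) = ⊤) :
    n ≤ s.card + Module.finrank κ (Submodule.span κ (Set.range (fun i j => h (φ j i)))) := by
  classical
  have hne : ∀ u : p.primeCompl, h u ≠ 0 := by
    intro u hu
    rw [← RingHom.mem_ker, hker] at hu
    exact u.2 hu
  have hnum : ∀ x : s, ∃ w : Fin n → R, ∃ t : p.primeCompl,
      (x : LocalizedModule p.primeCompl E) = LocalizedModule.mk (π w) t := by
    rintro ⟨x, hx⟩
    induction x using LocalizedModule.induction_on with
    | _ m t =>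
      obtain ⟨w, rfl⟩ := hsurj m
      exact ⟨w, t, rfl⟩
  choose w t hw using hnum
  have h1 : ∀ x : LocalizedModule p.primeCompl E, ∃ u : p.primeCompl,
      ∃ z ∈ Submodule.span R (Set.range w), u • x = LocalizedModule.mk (π z) 1 := by
    intro x
    have hx : x ∈ Submodule.span (Localization.AtPrime p)
          (s : Set (LocalizedModule p.primeCompl E)) := by rw [hs]; trivial
    induction hx using Submodule.span_induction with
    | mem x hx =>
      refine ⟨t ⟨x, hx⟩, w ⟨x, hx⟩, Submodule.subset_span ⟨_, rfl⟩, ?_⟩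
      refine (congrArg (fun y => (t ⟨x, hx⟩ : R) • y) (hw ⟨x, hx⟩)).trans ?_
      rw [LocalizedModule.smul'_mk]
      exact LocalizedModule.mk_cancel _ _
    | zero => exact ⟨1, 0, Submodule.zero_mem _, by simp⟩
    | add x y _ _ hx hy =>
      obtain ⟨u, z, hz, hx⟩ := hx
      obtain ⟨u', z', hz', hy⟩ := hy
      refine ⟨u * u', (u' : R) • z + (u : R) • z', Submodule.add_mem _ (Submodule.smul_mem _ _ hz)
        (Submodule.smul_mem _ _ hz'), ?_⟩
      have e1 : (u * u') • (x + y) = u' • (u • x) + u • (u' • y) := by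
        rw [smul_add, mul_smul, mul_smul, smul_comm u u' x]
      rw [e1, hx, hy, ← LocalizedModule.mkLinearMap_apply, ← LocalizedModule.mkLinearMap_apply,
        ← LocalizedModule.mkLinearMap_apply, map_add, map_smul, map_smul, map_add,
        map_smul, map_smul]
      rfl
    | smul a x _ hx =>
      obtain ⟨u, z, hz, hx⟩ := hx
      obtain ⟨⟨r, t'⟩, rfl⟩ := IsLocalization.mk'_surjective p.primeCompl a
      refine ⟨u * t', r • z, Submodule.smul_mem _ _ hz, ?_⟩
      have e1 : (u * t') • (IsLocalization.mk' (Localization.AtPrime p) r t' • x) =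
          r • (u • x) := by
        have e2 : t' • (IsLocalization.mk' (Localization.AtPrime p) r t' • x) = r • x := by
          rw [Submonoid.smul_def, ← smul_assoc, IsLocalization.smul_mk'_self, algebraMap_smul]
        rw [mul_smul, e2, smul_comm]
      rw [e1, hx, LocalizedModule.smul'_mk, map_smul]
  set W := Submodule.span κ (Set.range (fun x j => h (w x j))) ⊔
    Submodule.span κ (Set.range (fun i j => h (φ j i))) with hW
  have h2 : ∀ z ∈ Submodule.span R (Set.range w), (fun j => h (z j)) ∈ W := by
    intro z hz
    induction hz using Submodule.span_induction with
    | mem x hx =>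
      obtain ⟨y, rfl⟩ := hx
      exact Submodule.mem_sup_left (Submodule.subset_span ⟨y, rfl⟩)
    | zero => simp only [Pi.zero_apply, map_zero]; exact W.zero_mem
    | add x y _ _ hx hy =>
      convert W.add_mem hx hy using 1
      ext j; simp
    | smul a x _ hx =>
      convert W.smul_mem (h a) hx using 1
      ext j; simp
  have h3 : ∀ c, (fun j => h ((φ *ᵥ c) j)) ∈ W := by
    intro c
    have : (fun j => h ((φ *ᵥ c) j)) = ∑ i, h (c i) • fun j => h (φ j i) := by
      ext j
      simp [mulVec, dotProduct, Finset.sum_apply, mul_comm]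
    rw [this]
    exact Submodule.sum_mem _ fun i _ => W.smul_mem _
      (Submodule.mem_sup_right (Submodule.subset_span ⟨i, rfl⟩))
  have h4 : ∀ a, (Pi.single a 1 : Fin n → κ) ∈ W := by
    intro a
    obtain ⟨u, z, hz, hu⟩ := h1 (LocalizedModule.mk (π (Pi.single a 1)) 1)
    rw [Submonoid.smul_def, LocalizedModule.smul'_mk, LocalizedModule.mk_eq] at hu
    obtain ⟨u', hu'⟩ := hu
    have h5 : ((u' * u : p.primeCompl) : R) • (Pi.single a 1 : Fin n → R) - (u' : R) • z ∈
        LinearMap.ker π := by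
      rw [LinearMap.mem_ker, map_sub, map_smul, map_smul, sub_eq_zero]
      simpa [Submonoid.smul_def, mul_smul] using hu'
    rw [hkerπ] at h5
    obtain ⟨c, hc⟩ := h5
    have h6 : h ((u' * u : p.primeCompl) : R) • (Pi.single a 1 : Fin n → κ) ∈ W := by
      have := W.add_mem (h3 c) (W.smul_mem (h u') (h2 z hz))
      convert this using 1
      ext j
      have hcj := congrArg h (congrFun hc j)
      simp only [mulVecLin_apply, Pi.sub_apply, Pi.smul_apply, smul_eq_mul, map_sub, map_mul] at hcj
      simp only [Pi.add_apply, Pi.smul_apply, smul_eq_mul, hcj, sub_add_cancel]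
      congr 1
      by_cases hj : j = a
      · subst hj; simp
      · simp [hj]
    have := W.smul_mem (h ((u' * u : p.primeCompl) : R))⁻¹ h6
    rwa [smul_smul, inv_mul_cancel₀ (hne _), one_smul] at this
  have h7 : W = ⊤ := by
    rw [eq_top_iff]
    intro v _
    have : v = ∑ j, v j • (Pi.single j 1 : Fin n → κ) := by
      ext i; simp [Finset.sum_apply, Pi.single_apply]
    rw [this]
    exact Submodule.sum_mem _ fun i _ => W.smul_mem _ (h4 i)
  have h8 := Submodule.finrank_add_le_finrank_add_finrank
    (Submodule.span κ (Set.range (fun x j => h (w x j))))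
    (Submodule.span κ (Set.range (fun i j => h (φ j i))))
  rw [← hW, h7, finrank_top, Module.finrank_fin_fun] at h8
  have h9 := finrank_range_le_card (R := κ) (fun (x : s) j => h (w x j))
  rw [Fintype.card_coe] at h9
  exact h8.trans (Nat.add_le_add_right h9 _)

theorem frac_residue {R : Type*} [CommRing R] (p : Ideal R) [p.IsPrime] :
    RingHom.ker ((algebraMap (R ⧸ p) (FractionRing (R ⧸ p))).comp (Ideal.Quotient.mk p)) = p ∧
    ∀ a : FractionRing (R ⧸ p), ∃ s r,
      ((algebraMap (R ⧸ p) (FractionRing (R ⧸ p))).comp (Ideal.Quotient.mk p)) s ≠ 0 ∧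
      ((algebraMap (R ⧸ p) (FractionRing (R ⧸ p))).comp (Ideal.Quotient.mk p)) s * a =
      ((algebraMap (R ⧸ p) (FractionRing (R ⧸ p))).comp (Ideal.Quotient.mk p)) r := by
  constructor
  · ext a
    rw [RingHom.mem_ker, RingHom.comp_apply, IsFractionRing.to_map_eq_zero_iff,
      Ideal.Quotient.eq_zero_iff_mem]
  · intro a
    obtain ⟨x, y, hy, rfl⟩ := IsFractionRing.div_surjective (A := R ⧸ p) a
    obtain ⟨x, rfl⟩ := Ideal.Quotient.mk_surjective x
    obtain ⟨y, rfl⟩ := Ideal.Quotient.mk_surjective y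
    have hy' : (algebraMap (R ⧸ p) (FractionRing (R ⧸ p))) (Ideal.Quotient.mk p y) ≠ 0 :=
      IsFractionRing.to_map_ne_zero_of_mem_nonZeroDivisors hy
    exact ⟨y, x, hy', by rw [RingHom.comp_apply, RingHom.comp_apply, mul_div_cancel₀ _ hy']⟩

theorem H2_R {R : Type} [CommRing R] [IsDomain R] [IsNoetherianRing R] (d e : ℕ)
    (E : Type) [AddCommGroup E] [Module R E]
    (φ : Matrix (Fin (d + e)) (Fin d) R)
    (hinj : Function.Injective φ.mulVecLin)
    (π : (Fin (d + e) → R) →ₗ[R] E)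
    (hsurj : Function.Surjective π)
    (hker : LinearMap.ker π = LinearMap.range φ.mulVecLin)
    (hGd : ∀ (p : Ideal R) (_ : p.IsPrime) (c : ℕ),
      ringKrullDim (Localization.AtPrime p) = (c : WithBot ℕ∞) → 1 ≤ c → c ≤ d - 1 →
      ∃ s : Finset (LocalizedModule p.primeCompl E), s.card ≤ c + e - 1 ∧
        Submodule.span (Localization.AtPrime p)
          (s : Set (LocalizedModule p.primeCompl E)) = ⊤)
    (P : Ideal (MvPolynomial (Fin (d + e)) R)) [P.IsPrime]
    (hP : ∀ i, lf (fun j => φ j i) ∈ P) : (d : ℕ∞) ≤ P.height := by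
  set p := P.comap (C : R →+* MvPolynomial (Fin (d + e)) R) with hp
  have hpp : p.IsPrime := Ideal.comap_isPrime _ _
  obtain ⟨hk, hfrac⟩ := frac_residue p
  set h := (algebraMap (R ⧸ p) (FractionRing (R ⧸ p))).comp (Ideal.Quotient.mk p) with hh
  obtain ⟨f, hf⟩ : ∃ f : Fin (Set.finrank (FractionRing (R ⧸ p)) (Set.range (fun i j => h (φ j i)))) → Fin d,
      LinearIndependent (FractionRing (R ⧸ p)) (fun i j => h (φ j (f i))) := by
    obtain ⟨f, hf, -, hf2⟩ := Submodule.exists_fun_fin_finrank_span_eq (FractionRing (R ⧸ p))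
      (Set.range (fun i j => h (φ j i)))
    choose g hg using hf
    refine ⟨g, ?_⟩
    have : (fun i j => h (φ j (g i))) = f := funext fun i => hg i
    exact this ▸ hf2
  have hmain := height_fiber P h hk hfrac (fun i j => φ j (f i)) hf (fun i => hP _)
  refine le_trans ?_ hmain
  rw [← hp]
  obtain ⟨c, hc⟩ := ENat.ne_top_iff_exists.1 (Ideal.height_ne_top_of_isPrime (I := p))
  rw [← hc, ← Nat.cast_add, Nat.cast_le]
  rcases Nat.eq_zero_or_pos c with h0 | h0
  · subst h0
    have hbot : p = ⊥ := by
      have : p ∈ minimalPrimes R := Ideal.height_eq_zero_iff.1 (by rw [← hc]; rfl)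
      rwa [IsDomain.minimalPrimes_eq_singleton_bot, Set.mem_singleton_iff] at this
    have hi : Function.Injective h := by
      rw [RingHom.injective_iff_ker_eq_bot, hk, hbot]
    have := finrank_span_eq_card (rank_zero h hfrac hi φ hinj)
    rw [Fintype.card_fin] at this
    simp only [Set.finrank]; omega
  · by_cases hcd : c ≤ d - 1
    · obtain ⟨s, hs1, hs2⟩ := hGd p hpp c (by
        rw [IsLocalization.AtPrime.ringKrullDim_eq_height p, ← hc]; rfl) h0 hcd
      have := rank_pos h p hk φ π hsurj hker s hs2
      simp only [Set.finrank]; omega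
    · omega

end PartEight

section PartNine
open MvPolynomial Matrix

theorem br_homog {k : Type*} [Field k] {n m : ℕ}
    (σ : Matrix (Fin (m + 2)) (Fin m) (MvPolynomial (Fin n) k))
    (hσ : ∀ t j, (σ t j).IsHomogeneous 1) (w w' : Fin (m + 2) → MvPolynomial (Fin n) k) (a b : ℕ)
    (hw : ∀ t, (w t).IsHomogeneous a) (hw' : ∀ t, (w' t).IsHomogeneous b) :
    (br σ w w').IsHomogeneous (a + b + m) := by
  rw [br_apply, Matrix.det_apply]
  let dg : Fin (m + 2) → ℕ := Fin.cons a (Fin.cons b (fun _ => 1))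
  have hdg : ∑ i, dg i = a + b + m := by
    simp [dg, Fin.sum_univ_succ, add_assoc]
  have hent : ∀ i j, (brMat σ w w' i j).IsHomogeneous (dg i) := by
    intro i j
    refine Fin.cases ?_ (fun i => Fin.cases ?_ (fun i => ?_) i) i
    · simpa [brMat, dg] using hw j
    · simpa [brMat, dg] using hw' j
    · simpa [brMat, dg] using hσ j i
  apply IsHomogeneous.sum
  intro p _
  have h1 : (∏ i, brMat σ w w' (p i) i).IsHomogeneous (a + b + m) := by
    rw [← hdg, ← Equiv.sum_comp p]
    exact IsHomogeneous.prod _ _ _ fun i _ => hent _ _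
  rcases Int.units_eq_one_or (Equiv.Perm.sign p) with h | h
  · rw [h, one_smul]; exact h1
  · rw [h, Units.neg_smul, one_smul]; exact h1.neg

theorem ev_homog {k : Type*} [Field k] {n m : ℕ} (i t : Fin (m + 2)) :
    (ev i t : MvPolynomial (Fin n) k).IsHomogeneous 0 := by
  by_cases h : t = i
  · subst h; simpa using isHomogeneous_one (Fin n) k
  · simpa [ev, h] using isHomogeneous_zero (Fin n) k 0

theorem Gm_homog {k : Type*} [Field k] {n m : ℕ}
    (σ : Matrix (Fin (m + 2)) (Fin m) (MvPolynomial (Fin n) k))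
    (U V : Matrix (Fin (m + 2)) (Fin (m + 2)) (MvPolynomial (Fin n) k))
    (hσ : ∀ t j, (σ t j).IsHomogeneous 1) (hU : ∀ t j, (U t j).IsHomogeneous 1)
    (hV : ∀ t j, (V t j).IsHomogeneous 1) (i t : Fin (m + 2)) :
    (Gm σ U V (ev i) t).IsHomogeneous (2 * m + 2) := by
  rw [Gm_apply]
  apply IsHomogeneous.add
  · have h1 : ∀ s, ((U *ᵥ cv σ (ev i)) s).IsHomogeneous (1 + (0 + 0 + m)) := by
      intro s
      apply IsHomogeneous.sum
      intro r _
      exact (hU s r).mul (br_homog σ hσ _ _ 0 0 (ev_homog i) (ev_homog r))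
    have := br_homog σ hσ _ _ _ _ h1 (fun s => hV s t)
    convert this using 1; ring
  · apply IsHomogeneous.sum
    intro r _
    have := (br_homog σ hσ _ _ _ _ (fun s => hU t s) (ev_homog r)).mul
      (br_homog σ hσ _ _ _ _ (ev_homog i) (fun s => hV s r))
    convert this using 1; ring

theorem quad_form {k : Type*} [Field k] {d : ℕ} (q : MvPolynomial (Fin d) k)
    (hq : q ∈ homogeneousSubmodule (Fin d) k 2) :
    ∃ c : Fin d → Fin d → k, q = ∑ s, ∑ r, C (c s r) * (X s * X r) := by
  classical
  rw [← homogeneousSubmodule_one_pow, homogeneousSubmodule_one_eq_span_X, pow_two,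
    Submodule.span_mul_span] at hq
  induction hq using Submodule.span_induction with
  | mem x hx =>
    obtain ⟨_, ⟨s, rfl⟩, _, ⟨r, rfl⟩, rfl⟩ := hx
    refine ⟨fun s' r' => if s' = s ∧ r' = r then 1 else 0, ?_⟩
    simp [apply_ite C, ite_and, ite_mul]
  | zero => exact ⟨0, by simp⟩
  | add x y _ _ hx hy =>
    obtain ⟨c, rfl⟩ := hx
    obtain ⟨c', rfl⟩ := hy
    exact ⟨c + c', by simp [add_mul, Finset.sum_add_distrib]⟩
  | smul a x _ hx =>
    obtain ⟨c, rfl⟩ := hx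
    exact ⟨a • c, by simp [Finset.smul_sum, smul_eq_C_mul, mul_assoc]⟩

theorem min_gen {k : Type*} [Field k] {n d m : ℕ} {M : Type*} [AddCommGroup M]
    [Module (MvPolynomial (Fin n) k) M]
    (σ : Matrix (Fin d) (Fin m) (MvPolynomial (Fin n) k))
    (hσ : ∀ t j, (σ t j).IsHomogeneous 1)
    (F : (Fin d → MvPolynomial (Fin n) k) →ₗ[MvPolynomial (Fin n) k] M)
    (hF : ∀ τ, F τ = 0 → ∃ q, τ = σ *ᵥ q) (s : Finset M)
    (hs : Submodule.span (MvPolynomial (Fin n) k) (s : Set M) = LinearMap.range F) :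
    d ≤ s.card := by
  classical
  have h1 : ∀ v : s, ∃ τ, F τ = v := by
    rintro ⟨v, hv⟩
    have : v ∈ LinearMap.range F := hs ▸ Submodule.subset_span hv
    exact this
  choose τ hτ using h1
  let cc : MvPolynomial (Fin n) k →+* k := constantCoeff
  have hσ0 : ∀ t j, cc (σ t j) = 0 := by
    intro t j
    exact (hσ t j).coeff_eq_zero (by simp)
  set W := Submodule.span k (Set.range fun (v : s) (t : Fin d) => cc (τ v t)) with hW
  have h2 : ∀ i, (Pi.single i 1 : Fin d → k) ∈ W := by
    intro i
    have h3 : F (Pi.single i 1) ∈ Submodule.span (MvPolynomial (Fin n) k) (s : Set M) := by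
      rw [hs]; exact ⟨_, rfl⟩
    rw [Submodule.mem_span_finset] at h3
    obtain ⟨c, -, hc⟩ := h3
    rw [← Finset.sum_coe_sort] at hc
    obtain ⟨q, hq⟩ := hF (Pi.single i 1 - ∑ v : s, c v • τ v) (by
      rw [map_sub, map_sum]
      simp only [map_smul, hτ]
      rw [hc, sub_self])
    have h4 : (Pi.single i 1 : Fin d → k) = ∑ v : s, cc (c v) • fun t => cc (τ v t) := by
      ext t
      have h5 := congrArg cc (congrFun hq t)
      simp only [Pi.sub_apply, map_sub, Finset.sum_apply, Pi.smul_apply, smul_eq_mul, map_sum,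
        map_mul, mulVec, dotProduct, hσ0, zero_mul, Finset.sum_const_zero, sub_eq_zero] at h5
      simp only [Finset.sum_apply, Pi.smul_apply, smul_eq_mul]
      rw [← h5]
      by_cases h : t = i
      · subst h; simp
      · simp [h]
    rw [h4]
    exact Submodule.sum_mem _ fun v _ => W.smul_mem _ (Submodule.subset_span ⟨v, rfl⟩)
  have h7 : W = ⊤ := by
    rw [eq_top_iff]
    intro v _
    have : v = ∑ j, v j • (Pi.single j 1 : Fin d → k) := by
      ext i; simp [Finset.sum_apply, Pi.single_apply]
    rw [this]
    exact Submodule.sum_mem _ fun i _ => W.smul_mem _ (h2 i)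
  have h9 := finrank_range_le_card (R := k) (fun (v : s) (t : Fin d) => cc (τ v t))
  rw [Fintype.card_coe, Set.finrank, ← hW, h7, finrank_top, Module.finrank_fin_fun] at h9
  exact h9

/-- linear part of `LT` -/
theorem LT_linear {A : Type*} [CommRing A] {m : ℕ} (σ : Matrix (Fin (m + 2)) (Fin m) A)
    (U V : Matrix (Fin (m + 2)) (Fin (m + 2)) A) (a : Fin (m + 2) → A)
    (ha : xg ⬝ᵥ (fun t => C (a t)) ∈ LT σ U V) : ∃ p, a = σ *ᵥ p := by
  classical
  let lam : Fin (m + 2) → MvPolynomial (Fin (m + 2)) A → A :=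
    fun t z => constantCoeff (pderiv t z)
  have lmul : ∀ t x y, lam t (x * y) =
      constantCoeff x * lam t y + constantCoeff y * lam t x := by
    intro t x y
    simp [lam, Derivation.leibniz]
  have ladd : ∀ t x y, lam t (x + y) = lam t x + lam t y := by
    intro t x y; simp [lam]
  have lX : ∀ t s, lam t (X s) = if s = t then 1 else 0 := by
    intro t s; simp only [lam, pderiv_X, Pi.single_apply, apply_ite constantCoeff, map_one, map_zero]
  have lC : ∀ t c, lam t (C c) = 0 := by intro t c; simp [lam]
  have llin : ∀ t (c : Fin (m + 2) → A), lam t (xg ⬝ᵥ fun s => C (c s)) = c t := by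
    intro t c
    have : lam t (xg ⬝ᵥ fun s => C (c s)) = ∑ s, lam t (X s * C (c s)) := by
      simp [lam, dotProduct, map_sum]
    rw [this]
    simp [lmul, lX, lC]
  have lquad : ∀ t (U : Matrix (Fin (m + 2)) (Fin (m + 2)) A),
      lam t (xg ⬝ᵥ (Dm (m := m) U *ᵥ xg)) = 0 := by
    intro t U
    have : lam t (xg ⬝ᵥ (Dm (m := m) U *ᵥ xg)) =
      ∑ s, lam t (X s * ((Dm (m := m) U *ᵥ xg) s)) := by
      simp [lam, dotProduct, map_sum]
    rw [this]
    apply Finset.sum_eq_zero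
    intro s _
    rw [lmul]
    simp [mulVec, dotProduct]
  have key : ∀ z ∈ LT σ U V, constantCoeff z = 0 ∧ ∃ p, (fun t => lam t z) = σ *ᵥ p := by
    intro z hz
    induction hz using Submodule.span_induction with
    | mem x hx =>
      rcases hx with ⟨l, rfl⟩ | hx | hx
      · refine ⟨by simp [vecMul, dotProduct], Pi.single l 1, ?_⟩
        ext t
        have := llin t (fun s => σ s l)
        simp only [mulVec_single_one]
        exact this
      · subst hx
        refine ⟨by simp [dotProduct], 0, ?_⟩
        ext t; simp [lquad]
      · rw [Set.mem_singleton_iff] at hx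
        subst hx
        refine ⟨by simp [dotProduct], 0, ?_⟩
        ext t; simp [lquad]
    | zero => exact ⟨by simp, 0, by ext t; simp [lam]⟩
    | add x y _ _ hx hy =>
      obtain ⟨hx0, p, hp⟩ := hx
      obtain ⟨hy0, q, hq⟩ := hy
      refine ⟨by simp [hx0, hy0], p + q, ?_⟩
      rw [mulVec_add, ← hp, ← hq]
      ext t; simp [ladd]
    | smul r x _ hx =>
      obtain ⟨hx0, p, hp⟩ := hx
      refine ⟨by simp [hx0], constantCoeff r • p, ?_⟩
      rw [mulVec_smul, ← hp]
      ext t; simp [lmul, hx0]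
  obtain ⟨-, p, hp⟩ := key _ ha
  refine ⟨p, ?_⟩
  rw [← hp]
  ext t; rw [llin]

end PartNine

section PartTen
open MvPolynomial Matrix

variable {k : Type} [Field k] {m n : ℕ}

/-- `∑ x_t a_t` -/
def pB {d : ℕ} (a : Fin d → T k n) : B k d n := ∑ t, X (Sum.inl t) * rename Sum.inr (a t)

theorem psi_inr {d : ℕ} (f : T k n) :
    sumAlgEquiv k (Fin d) (Fin n) (rename Sum.inr f) = C f := by
  have := congrArg (fun g => g f) (sumAlgEquiv_comp_rename_inr (R := k) (S₁ := Fin d) (S₂ := Fin n))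
  simpa using this

theorem psi_pB (a : Fin (m + 2) → T k n) :
    sumAlgEquiv k (Fin (m + 2)) (Fin n) (pB a) = xg ⬝ᵥ (fun t => C (a t)) := by
  simp [pB, dotProduct, psi_inr]

/-- the map from `T^d` onto the degree one strand -/
def Gx {d : ℕ} (L : Ideal (B k d n)) : (Fin d → T k n) →ₗ[T k n] (B k d n ⧸ L) :=
  Fintype.linearCombination (T k n) (fun t => Ideal.Quotient.mk L (X (Sum.inl t)))

theorem smul_mk {d : ℕ} (L : Ideal (B k d n)) (c : T k n) (b : B k d n) :
    c • Ideal.Quotient.mk L b = Ideal.Quotient.mk L (rename Sum.inr c * b) := rfl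

theorem Gx_apply {d : ℕ} (L : Ideal (B k d n)) (a : Fin d → T k n) :
    Gx L a = Ideal.Quotient.mk L (pB a) := by
  simp only [Gx, Fintype.linearCombination_apply, smul_mk, pB, map_sum, mul_comm]

theorem rename_inr_wh {d : ℕ} (f : T k n) (N : ℕ) (hf : f.IsHomogeneous N) :
    (rename Sum.inr f : B k d n).IsWeightedHomogeneous (bwt d n) (0, N) := by
  intro u hu
  obtain ⟨u', rfl, hu'⟩ := coeff_rename_ne_zero _ _ _ hu
  have h1 := hf hu'
  rw [Finsupp.weight_apply, Finsupp.sum] at h1 ⊢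
  rw [Finsupp.mapDomain_support_of_injective Sum.inr_injective, Finset.sum_image (fun _ _ _ _ h => Sum.inr_injective h)]
  simp only [Finsupp.mapDomain_apply Sum.inr_injective, bwt, Sum.elim_inr]
  rw [← h1]
  ext
  · simp [Prod.fst_sum]
  · simp [Prod.snd_sum]

theorem pB_wh {d : ℕ} (a : Fin d → T k n) (N : ℕ) (ha : ∀ t, (a t).IsHomogeneous N) :
    (pB a) ∈ weightedHomogeneousSubmodule k (bwt d n) (1, N) := by
  refine Submodule.sum_mem _ fun t _ => ?_
  rw [mem_weightedHomogeneousSubmodule]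
  have h1 : (X (Sum.inl t) : B k d n).IsWeightedHomogeneous (bwt d n) (1, 0) :=
    isWeightedHomogeneous_X k (bwt d n) (Sum.inl t)
  have := h1.mul (rename_inr_wh (d := d) (a t) N (ha t))
  simpa using this

theorem wx_one {d : ℕ} (g : B k d n) (hg : g.IsWeightedHomogeneous (wx d n) 1) :
    ∃ a : Fin d → T k n, g = pB a := by
  classical
  let Nn : Submodule k (B k d n) :=
    { carrier := {g | ∃ a : Fin d → T k n, g = pB a}
      add_mem' := by
        rintro _ _ ⟨a, rfl⟩ ⟨b, rfl⟩
        exact ⟨a + b, by simp [pB, mul_add, Finset.sum_add_distrib]⟩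
      zero_mem' := ⟨0, by simp [pB]⟩
      smul_mem' := by
        rintro c _ ⟨a, rfl⟩
        exact ⟨c • a, by simp [pB, Finset.smul_sum]⟩ }
  suffices h : g ∈ Nn from h
  rw [g.as_sum]
  refine Submodule.sum_mem _ fun u hu => ?_
  have hw := hg (mem_support_iff.1 hu)
  rw [Finsupp.weight_apply, Finsupp.sum_fintype _ _ (by simp), Fintype.sum_sum_type] at hw
  simp only [wx, Sum.elim_inl, Sum.elim_inr, smul_eq_mul, mul_one, mul_zero,
    Finset.sum_const_zero, add_zero] at hw
  obtain ⟨t, ht⟩ : ∃ t, u (Sum.inl t) ≠ 0 := by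
    by_contra hcon
    push Not at hcon
    simp [hcon] at hw
  have hs := Finset.add_sum_erase Finset.univ (fun t => u (Sum.inl t)) (Finset.mem_univ t)
  rw [hw] at hs
  have ht1 : u (Sum.inl t) = 1 := by omega
  have h0 : ∀ s, s ≠ t → u (Sum.inl s) = 0 := by
    intro s hst
    have : ∑ x ∈ Finset.univ.erase t, u (Sum.inl x) = 0 := by omega
    rw [Finset.sum_eq_zero_iff] at this
    exact this s (by simp [hst])
  let u' : Fin n →₀ ℕ := Finsupp.equivFunOnFinite.symm fun j => u (Sum.inr j)
  refine ⟨Pi.single t (monomial u' (coeff u g)), ?_⟩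
  have h1 : pB (Pi.single t (monomial u' (coeff u g)) : Fin d → T k n) =
      X (Sum.inl t) * rename Sum.inr (monomial u' (coeff u g)) := by
    rw [pB, Finset.sum_eq_single t]
    · simp
    · intro s _ hst; simp [hst]
    · simp
  rw [h1, rename_monomial, X, monomial_mul, one_mul]
  have huu : u = Finsupp.single (Sum.inl t) 1 + Finsupp.mapDomain Sum.inr u' := ?_
  · rw [← huu]
  ext x
  rcases x with s | j
  · by_cases hst : s = t
    · subst hst
      rw [Finsupp.add_apply, Finsupp.mapDomain_of_notMem_range _ _ (by simp)]
      simp [ht1]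
    · rw [Finsupp.add_apply, Finsupp.mapDomain_of_notMem_range _ _ (by simp), h0 s hst,
        Finsupp.single_eq_of_ne (by simp [hst]), add_zero]
  · rw [Finsupp.add_apply, Finsupp.mapDomain_apply Sum.inr_injective]
    simp [u']

theorem SxDeg_one {d : ℕ} (L : Ideal (B k d n)) :
    SxDegZ k d n L 1 = LinearMap.range (Gx L) := by
  rw [SxDegZ, if_pos (by norm_num)]
  apply le_antisymm
  · rw [SxDeg, Submodule.span_le]
    rintro _ ⟨g, hg, rfl⟩
    obtain ⟨a, rfl⟩ := wx_one g hg
    exact ⟨a, Gx_apply L a⟩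
  · rintro _ ⟨a, rfl⟩
    simp only [Gx, Fintype.linearCombination_apply]
    refine Submodule.sum_mem _ fun t _ => Submodule.smul_mem _ _ (Submodule.subset_span ⟨_, ?_, rfl⟩)
    exact isWeightedHomogeneous_X k (wx d n) (Sum.inl t)

theorem mem_H0 {d : ℕ} (L : Ideal (B k d n)) (b : B k d n) :
    Ideal.Quotient.mk L b ∈ H0 k d n L ↔ ∃ N, ∀ r ∈ mxB k d n ^ N, r * b ∈ L := by
  rw [H0, Submodule.mem_iSup_of_directed]
  · apply exists_congr
    intro N
    rw [Submodule.mem_torsionBySet_iff]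
    constructor
    · intro h r hr
      have := h ⟨r, hr⟩
      rwa [← Ideal.Quotient.eq_zero_iff_mem]
    · rintro h ⟨r, hr⟩
      exact Ideal.Quotient.eq_zero_iff_mem.2 (h r hr)
  · apply Monotone.directed_le
    intro N N' hN
    exact Submodule.torsionBySet_le_torsionBySet_of_subset (Ideal.pow_le_pow_right hN)

theorem core (σ : Matrix (Fin (m + 2)) (Fin m) (T k n))
    (U V : Matrix (Fin (m + 2)) (Fin (m + 2)) (T k n))
    (hσ : ∀ t j, (σ t j).IsHomogeneous 1) (hU : ∀ t j, (U t j).IsHomogeneous 1)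
    (hV : ∀ t j, (V t j).IsHomogeneous 1)
    (L : Ideal (B k (m + 2) n))
    (hL : ∀ z, z ∈ L ↔ sumAlgEquiv k (Fin (m + 2)) (Fin n) z ∈ LT σ U V)
    (hI : ∀ P : Ideal (T k n), P.IsPrime → (∀ i j, br σ (ev i) (ev j) ∈ P) → 3 ≤ P.height)
    (H2 : ∀ P : Ideal (MvPolynomial (Fin (m + 2)) (T k n)), P.IsPrime → LT σ U V ≤ P →
      ((m + 2 : ℕ) : ℕ∞) ≤ P.height) :
    ∃ g : Fin (m + 2) → B k (m + 2) n,
      (∀ i, g i ∈ weightedHomogeneousSubmodule k (bwt (m + 2) n) (1, 2 * (m + 2) - 2)) ∧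
      AcompZ k (m + 2) n L 1 =
        Submodule.span (T k n) (Set.range fun i => Ideal.Quotient.mk L (g i)) ∧
      (∀ s : Finset (B k (m + 2) n ⧸ L),
        Submodule.span (T k n) (s : Set (B k (m + 2) n ⧸ L)) =
          AcompZ k (m + 2) n L 1 → m + 2 ≤ s.card) := by
  classical
  let F := (Gx L).comp (Gm σ U V)
  have hGker : ∀ a, Gx L a = 0 ↔ ∃ p, a = σ *ᵥ p := by
    intro a
    rw [Gx_apply, Ideal.Quotient.eq_zero_iff_mem, hL, psi_pB]
    constructor
    · exact LT_linear σ U V a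
    · rintro ⟨p, rfl⟩
      have : (xg ⬝ᵥ fun t => C ((σ *ᵥ p) t)) =
          ∑ l, C (p l) * (xg ᵥ* Dm (m := m) σ) l := by
        simp only [dotProduct, mulVec, vecMul, map_sum, Finset.mul_sum, map_apply, map_mul]
        rw [Finset.sum_comm]
        exact Finset.sum_congr rfl fun l _ => Finset.sum_congr rfl fun t _ => by ring
      rw [this]
      exact Ideal.sum_mem _ fun l _ => Ideal.mul_mem_left _ _
        (Ideal.subset_span (Or.inl ⟨l, rfl⟩))
  have hFker : ∀ τ, F τ = 0 → ∃ q, τ = σ *ᵥ q := by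
    intro τ h
    obtain ⟨p, hp⟩ := (hGker _).1 h
    exact main_K3 σ U V hI H2 τ p hp
  -- generators lie in H0
  have hH0 : ∀ τ, F τ ∈ H0 k (m + 2) n L := by
    intro τ
    change Gx L (Gm σ U V τ) ∈ _
    rw [Gx_apply, mem_H0]
    refine ⟨2, ?_⟩
    have hA := lemmaA_mod (LT σ U V) (Dm (m := m) σ) (Dm (m := m) U) (Dm (m := m) V) xg
      (fun t => C (τ t)) (fun l => Ideal.subset_span (Or.inl ⟨l, rfl⟩))
      (Ideal.subset_span (Or.inr (Or.inl rfl))) (Ideal.subset_span (Or.inr (Or.inr rfl)))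
    have hG : Gm (Dm (m := m) σ) (Dm (m := m) U) (Dm (m := m) V) (fun t => C (τ t)) =
        fun t => C (Gm σ U V τ t) := by
      ext t : 1
      exact Gm_map C σ U V τ t
    rw [hG] at hA
    have hxx : ∀ s t, X (Sum.inl s) * X (Sum.inl t) * pB (Gm σ U V τ) ∈ L := by
      intro s t
      rw [hL, map_mul, map_mul, psi_pB, sumAlgEquiv_X_inl, sumAlgEquiv_X_inl]
      obtain ⟨h1, -⟩ := hA t
      obtain ⟨-, h2⟩ := hA s
      have h3 := Ideal.add_mem _ (Ideal.mul_mem_left _ (X s) h1)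
        (Ideal.mul_mem_left _ (br (Dm (m := m) σ) (fun t => C (τ t)) (ev t)) h2)
      convert h3 using 1
      ring
    intro r hr
    have hle : mxB k (m + 2) n ^ 2 ≤ Submodule.comap
        (LinearMap.mulRight (B k (m + 2) n) (pB (Gm σ U V τ))) L := by
      rw [mxB, pow_two, Ideal.span_mul_span', Ideal.span_le]
      rintro _ ⟨_, ⟨s, rfl⟩, _, ⟨t, rfl⟩, rfl⟩
      exact hxx s t
    exact hle hr
  have hA1 : AcompZ k (m + 2) n L 1 = LinearMap.range F := by
    rw [AcompZ, SxDeg_one]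
    apply le_antisymm
    · rintro _ ⟨h1, ⟨a, rfl⟩⟩
      have h1' : Gx L a ∈ H0 k (m + 2) n L := h1
      rw [Gx_apply, mem_H0] at h1'
      obtain ⟨N, hN⟩ := h1'
      obtain ⟨τ, p, hap⟩ := main_gen σ U V (QProp.mvPolynomial k n) hI H2 a N (by
        intro r hr
        have hmap : (Ideal.span (Set.range X) : Ideal (MvPolynomial (Fin (m + 2)) (T k n))) ^ N =
            (mxB k (m + 2) n ^ N).map (sumAlgEquiv k (Fin (m + 2)) (Fin n)) := by
          rw [Ideal.map_pow, mxB, Ideal.map_span, ← Set.range_comp]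
          congr 3
          ext t : 1
          simp
        rw [hmap] at hr
        obtain ⟨r', hr', rfl⟩ := (Ideal.mem_map_of_equiv (sumAlgEquiv k (Fin (m + 2)) (Fin n)) _).1 hr
        have := (hL _).1 (hN r' hr')
        rwa [map_mul, psi_pB] at this)
      refine ⟨τ, ?_⟩
      change Gx L (Gm σ U V τ) = _
      rw [hap, map_add, (hGker (σ *ᵥ p)).2 ⟨p, rfl⟩, add_zero]
    · rintro _ ⟨τ, rfl⟩
      exact ⟨hH0 τ, ⟨_, rfl⟩⟩
  refine ⟨fun i => pB (Gm σ U V (ev i)), ?_, ?_, ?_⟩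
  · intro i
    exact pB_wh _ _ fun t => Gm_homog σ U V hσ hU hV i t
  · rw [hA1]
    have : (fun i => Ideal.Quotient.mk L (pB (Gm σ U V (ev i)))) = fun i => F (ev i) := by
      ext i : 1
      exact (Gx_apply L _).symm
    rw [this]
    have h2 : (fun i => F (ev i)) = F ∘ (Pi.basisFun (T k n) (Fin (m + 2))) := by
      ext i : 1; simp
    rw [h2, Set.range_comp, ← Submodule.map_span, Module.Basis.span_eq, Submodule.map_top]
  · intro s hs
    exact min_gen σ hσ F hFker s (hs.trans hA1)

end PartTen

section PartEleven
open MvPolynomial Matrix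

theorem phi_inl {k : Type} [Field k] {d n : ℕ} (f : MvPolynomial (Fin d) k) :
    ((renameEquiv k (Equiv.sumComm (Fin d) (Fin n))).trans (sumAlgEquiv k (Fin n) (Fin d)))
      (rename Sum.inl f) = C f := by
  rw [AlgEquiv.trans_apply, renameEquiv_apply, rename_rename]
  exact psi_inr f

theorem phi_inr {k : Type} [Field k] {d n : ℕ} (j : Fin n) :
    ((renameEquiv k (Equiv.sumComm (Fin d) (Fin n))).trans (sumAlgEquiv k (Fin n) (Fin d)))
      (X (Sum.inr j)) = X j := by
  simp

theorem exists_quad {k : Type} [Field k] {m n : ℕ} (q : Fin n → MvPolynomial (Fin (m + 2)) k)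
    (hq : ∀ j, q j ∈ homogeneousSubmodule (Fin (m + 2)) k 2) :
    ∃ U : Matrix (Fin (m + 2)) (Fin (m + 2)) (T k n), (∀ t j, (U t j).IsHomogeneous 1) ∧
      sumAlgEquiv k (Fin (m + 2)) (Fin n) (∑ j, rename Sum.inl (q j) * X (Sum.inr j)) =
        xg ⬝ᵥ (Dm (m := m) U *ᵥ xg) := by
  choose c hc using fun j => quad_form (q j) (hq j)
  refine ⟨Matrix.of fun s r => ∑ j, C (c j s r) * X j, ?_, ?_⟩
  · intro s r
    rw [Matrix.of_apply]
    apply IsHomogeneous.sum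
    intro j _
    have := (isHomogeneous_C (Fin n) (c j s r)).mul (isHomogeneous_X k j)
    simpa using this
  · simp only [hc, map_sum, map_mul, rename_C, rename_X, sumAlgEquiv_X_inl, sumAlgEquiv_X_inr,
      sumAlgEquiv_C_inl, dotProduct, mulVec, Matrix.map_apply, Matrix.of_apply, Finset.sum_mul, Finset.mul_sum]
    rw [Finset.sum_comm]
    refine Finset.sum_congr rfl fun s _ => ?_
    rw [Finset.sum_comm]
    refine Finset.sum_congr rfl fun r _ => ?_
    refine Finset.sum_congr rfl fun j _ => ?_
    ring

theorem final {k : Type} [Field k] (m e : ℕ)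
    (E : Type) [AddCommGroup E] [Module (MvPolynomial (Fin (m + 2)) k) E]
    (φ : Matrix (Fin (m + 2 + e)) (Fin (m + 2)) (MvPolynomial (Fin (m + 2)) k))
    (hinj : Function.Injective φ.mulVecLin)
    (π : (Fin (m + 2 + e) → MvPolynomial (Fin (m + 2)) k) →ₗ[MvPolynomial (Fin (m + 2)) k] E)
    (hsurj : Function.Surjective π)
    (hker : LinearMap.ker π = LinearMap.range φ.mulVecLin)
    (hdeg : ∀ (i : Fin (m + 2 + e)) (j : Fin (m + 2)),
      (m ≤ (j : ℕ) → φ i j ∈ homogeneousSubmodule (Fin (m + 2)) k 2))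
    (hGd : ∀ (p : Ideal (MvPolynomial (Fin (m + 2)) k)) (_ : p.IsPrime) (c : ℕ),
      ringKrullDim (Localization.AtPrime p) = (c : WithBot ℕ∞) → 1 ≤ c → c ≤ m + 2 - 1 →
      ∃ s : Finset (LocalizedModule p.primeCompl E), s.card ≤ c + e - 1 ∧
        Submodule.span (Localization.AtPrime p)
          (s : Set (LocalizedModule p.primeCompl E)) = ⊤)
    (ℓ : Fin (m + 2) → B k (m + 2) (m + 2 + e))
    (hℓ : ∀ i, ℓ i = ∑ j, (rename Sum.inl (φ j i)) * X (Sum.inr j))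
    (L : Ideal (B k (m + 2) (m + 2 + e))) (hL : L = Ideal.span (Set.range ℓ))
    (σ : Matrix (Fin (m + 2)) (Fin m) (T k (m + 2 + e)))
    (hσlin : ∀ t j, σ t j ∈ homogeneousSubmodule (Fin (m + 2 + e)) k 1)
    (hσ : ∀ j : Fin m,
      ℓ (Fin.castLE (by omega) j) =
        ∑ t : Fin (m + 2), X (Sum.inl t) * (rename Sum.inr (σ t j) : B k (m + 2) (m + 2 + e)))
    (hht3 : htGE (minorsIdeal σ m) 3) :
    ∃ g : Fin (m + 2) → B k (m + 2) (m + 2 + e),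
      (∀ i, g i ∈ weightedHomogeneousSubmodule k (bwt (m + 2) (m + 2 + e)) (1, 2 * (m + 2) - 2)) ∧
      AcompZ k (m + 2) (m + 2 + e) L 1 =
        Submodule.span (T k (m + 2 + e)) (Set.range fun i => Ideal.Quotient.mk L (g i)) ∧
      (∀ s : Finset (B k (m + 2) (m + 2 + e) ⧸ L),
        Submodule.span (T k (m + 2 + e)) (s : Set (B k (m + 2) (m + 2 + e) ⧸ L)) =
          AcompZ k (m + 2) (m + 2 + e) L 1 → m + 2 ≤ s.card) := by
  classical
  let i0 : Fin (m + 2) := ⟨m, by omega⟩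
  let i1 : Fin (m + 2) := ⟨m + 1, by omega⟩
  obtain ⟨U, hU, hU2⟩ := exists_quad (fun j => φ j i0) (fun j => hdeg j i0 le_rfl)
  obtain ⟨V, hV, hV2⟩ := exists_quad (fun j => φ j i1) (fun j => hdeg j i1 (Nat.le_succ m))
  rw [← hℓ] at hU2 hV2
  have hS : ∀ j : Fin m, sumAlgEquiv k (Fin (m + 2)) (Fin (m + 2 + e))
      (ℓ (Fin.castLE (by omega) j)) = (xg ᵥ* Dm (m := m) σ) j := by
    intro j
    rw [hσ]
    exact psi_pB (fun t => σ t j)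
  have hmem : ∀ i, sumAlgEquiv k (Fin (m + 2)) (Fin (m + 2 + e)) (ℓ i) ∈
      (Set.range (xg ᵥ* Dm (m := m) σ) ∪
    {xg ⬝ᵥ (Dm (m := m) U *ᵥ xg), xg ⬝ᵥ (Dm (m := m) V *ᵥ xg)}) := by
    intro i
    by_cases h1 : (i : ℕ) < m
    · exact Or.inl ⟨⟨i, h1⟩, (hS ⟨i, h1⟩).symm⟩
    · by_cases h2 : (i : ℕ) = m
      · have : i = i0 := Fin.ext h2
        rw [this, hU2]; exact Or.inr (Or.inl rfl)
      · have : i = i1 := Fin.ext (by have := i.2; simp only [i1]; omega)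
        rw [this, hV2]; exact Or.inr (Or.inr rfl)
  have hset : (sumAlgEquiv k (Fin (m + 2)) (Fin (m + 2 + e))) '' (Set.range ℓ) =
      (Set.range (xg ᵥ* Dm (m := m) σ) ∪
    {xg ⬝ᵥ (Dm (m := m) U *ᵥ xg), xg ⬝ᵥ (Dm (m := m) V *ᵥ xg)}) := by
    apply Set.Subset.antisymm
    · rintro _ ⟨_, ⟨i, rfl⟩, rfl⟩
      exact hmem i
    · rintro _ (⟨j, rfl⟩ | rfl | rfl)
      · exact ⟨_, ⟨_, rfl⟩, hS j⟩
      · exact ⟨_, ⟨_, rfl⟩, hU2⟩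
      · exact ⟨_, ⟨_, rfl⟩, hV2⟩
  have hmap : L.map (sumAlgEquiv k (Fin (m + 2)) (Fin (m + 2 + e))) = LT σ U V := by
    rw [hL, Ideal.map_span, hset]; rfl
  refine core σ U V (fun t j => hσlin t j) hU hV L ?_ ?_ ?_
  · intro z
    rw [← hmap, Ideal.mem_map_of_equiv]
    constructor
    · intro hz; exact ⟨z, hz, rfl⟩
    · rintro ⟨z', hz', h⟩
      rwa [← (sumAlgEquiv k (Fin (m + 2)) (Fin (m + 2 + e))).injective h]
  · intro P hP hbr
    have h1 := hht3 P hP (by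
      rw [minorsIdeal, Ideal.span_le]
      rintro _ ⟨f, g, rfl⟩
      exact minor_mem σ P hbr f g)
    rw [IsLocalization.AtPrime.ringKrullDim_eq_height P] at h1
    exact WithBot.coe_le_coe.1 h1
  · intro P hP hLP
    let Φ := (renameEquiv k (Equiv.sumComm (Fin (m + 2)) (Fin (m + 2 + e)))).trans
      (sumAlgEquiv k (Fin (m + 2 + e)) (Fin (m + 2)))
    let Θ := (Φ.symm.trans (sumAlgEquiv k (Fin (m + 2)) (Fin (m + 2 + e)))).toRingEquiv
    have hP' : (P.comap Θ).IsPrime := Ideal.comap_isPrime _ _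
    have h1 := H2_R (m + 2) e E φ hinj π hsurj hker hGd (P.comap Θ) (by
      intro i
      rw [Ideal.mem_comap]
      have h2 : Φ (ℓ i) = lf (fun j => φ j i) := by
        rw [hℓ, lf_apply, map_sum]
        refine Finset.sum_congr rfl fun j _ => ?_
        rw [map_mul]
        exact congrArg₂ _ (phi_inl _) (phi_inr _)
      have h3 : Θ (lf (fun j => φ j i)) =
          sumAlgEquiv k (Fin (m + 2)) (Fin (m + 2 + e)) (ℓ i) := by
        rw [← h2]
        change sumAlgEquiv k (Fin (m + 2)) (Fin (m + 2 + e)) (Φ.symm (Φ (ℓ i))) = _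
        rw [AlgEquiv.symm_apply_apply]
      rw [h3]
      exact hLP (Ideal.subset_span (hmem i)))
    rwa [RingEquiv.height_comap] at h1

end PartEleven

theorem A1_generators
    (d e : ℕ) (hd : 3 ≤ d)
    (E : Type) [AddCommGroup E] [Module (MvPolynomial (Fin d) k) E]
    [Module.Finite (MvPolynomial (Fin d) k) E]
    -- `E` is torsion-free
    (htf : Submodule.torsion (MvPolynomial (Fin d) k) E = ⊥)
    -- `0 → R^d →φ R^{d+e} →π E → 0` is a (minimal) free resolution, so `pd E = 1`,
    -- `rank E = e`
    (φ : Matrix (Fin (d + e)) (Fin d) (MvPolynomial (Fin d) k))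
    (hinj : Function.Injective φ.mulVecLin)
    (π : (Fin (d + e) → MvPolynomial (Fin d) k) →ₗ[MvPolynomial (Fin d) k] E)
    (hsurj : Function.Surjective π)
    (hker : LinearMap.ker π = LinearMap.range φ.mulVecLin)
    -- `φ = [φ′ | φ″]`: the first `d−2` columns are linear, the last two are quadrics
    (hdeg : ∀ (i : Fin (d + e)) (j : Fin d),
      ((j : ℕ) < d - 2 → φ i j ∈ homogeneousSubmodule (Fin d) k 1) ∧
      (d - 2 ≤ (j : ℕ) → φ i j ∈ homogeneousSubmodule (Fin d) k 2))
    -- `I_1(φ) = (x_1,…,x_d)`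
    (hI1 : Ideal.span {r : MvPolynomial (Fin d) k | ∃ i j, φ i j = r} =
      Ideal.span (Set.range X))
    -- `E` is minimally generated by `μ(E) = d+e` elements
    (hμ : ∀ s : Finset E, Submodule.span (MvPolynomial (Fin d) k) (s : Set E) = ⊤ →
      d + e ≤ s.card)
    -- `E` satisfies `G_d`
    (hGd : ∀ (p : Ideal (MvPolynomial (Fin d) k)) (_ : p.IsPrime) (c : ℕ),
      ringKrullDim (Localization.AtPrime p) = (c : WithBot ℕ∞) → 1 ≤ c → c ≤ d - 1 →
      ∃ s : Finset (LocalizedModule p.primeCompl E), s.card ≤ c + e - 1 ∧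
        Submodule.span (Localization.AtPrime p)
          (s : Set (LocalizedModule p.primeCompl E)) = ⊤)
    -- the defining ideal `L` of the symmetric algebra: `[ℓ_1 … ℓ_d] = [y_1 … y_{d+e}]·φ`
    (ℓ : Fin d → B k d (d + e))
    (hℓ : ∀ i, ℓ i = ∑ j, (rename Sum.inl (φ j i)) * X (Sum.inr j))
    (L : Ideal (B k d (d + e))) (hL : L = Ideal.span (Set.range ℓ))
    (σ : Matrix (Fin d) (Fin (d - 2)) (T k (d + e)))
    (hσlin : ∀ t j, σ t j ∈ homogeneousSubmodule (Fin (d + e)) k 1)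
    (hσ : ∀ j : Fin (d - 2),
      ℓ (Fin.castLE (by omega) j) =
        ∑ t : Fin d, X (Sum.inl t) * (rename Sum.inr (σ t j) : B k d (d + e)))
    -- `ht I(σ) = 3`
    (hht3 : htGE (minorsIdeal σ (d - 2)) 3)
    (hht3' : ¬ htGE (minorsIdeal σ (d - 2)) 4) :
    ∃ g : Fin d → B k d (d + e),
      (∀ i, g i ∈ weightedHomogeneousSubmodule k (bwt d (d + e)) (1, 2 * d - 2)) ∧
      AcompZ k d (d + e) L 1 =
        Submodule.span (T k (d + e)) (Set.range fun i => Ideal.Quotient.mk L (g i)) ∧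
      (∀ s : Finset (B k d (d + e) ⧸ L),
        Submodule.span (T k (d + e)) (s : Set (B k d (d + e) ⧸ L)) =
          AcompZ k d (d + e) L 1 → d ≤ s.card) := by
  obtain ⟨m, rfl⟩ : ∃ m, d = m + 2 := ⟨d - 2, by omega⟩
  exact final m e E φ hinj π hsurj hker (fun i j => (hdeg i j).2) hGd ℓ hℓ L hL σ hσlin hσ hht3

end Stmt10
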